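/- arXiv:2508.08870 — 2 statements merged into one kernel-verified Lean document; each statement's English description precedes it below -/
import Mathlib

section
/- Let b = 1/48 and fix an integer d ≥ 2. Identify each norm on ℝ^d with its unit ball and endow the space of all norms on ℝ^d with the topology induced by the Hausdorff distance between unit balls. Then the set of norms ‖·‖ on ℝ^d failing the following property is meagre: for every ε > 0 there exists n₀ such that for every n > n₀, every set P of n points in ℝ^d whose affine span is all of ℝ^d determines at least (b·d − ε)·n distinct distances with respect to ‖·‖. -/
/-- The space of norms on `ℝ^d`, each norm represented by a seminorm that
vanishes only at `0`. -/
def NormOn (d : ℕ) : Type :=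
  {N : Seminorm ℝ (EuclideanSpace ℝ (Fin d)) // ∀ x, N x = 0 → x = 0}

/-- The unit ball of a norm on `ℝ^d`. -/
def NormOn.unitBall {d : ℕ} (N : NormOn d) : Set (EuclideanSpace ℝ (Fin d)) :=
  {x | N.1 x ≤ 1}

/-- The space of norms on `ℝ^d`, with the topology induced by the Hausdorff
distance between unit balls. -/
noncomputable instance (d : ℕ) : PseudoEMetricSpace (NormOn d) where
  edist N M := EMetric.hausdorffEdist N.unitBall M.unitBall
  edist_self N := EMetric.hausdorffEdist_self
  edist_comm N M := EMetric.hausdorffEdist_comm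
  edist_triangle N M K := EMetric.hausdorffEdist_triangle

/-!
Call a norm generic if it takes at least `|X| - |Z|` distinct values on every finite set `X` of
pairwise nonparallel vectors whose coordinates lie in the field `ℚ(Z)`. Almost all norms are
generic. The configurations `X` with prescribed `|X|` and `|Z|` form a σ-compact set, so it is
enough to perturb a norm away from the bad event over a compact set of configurations. Approximate
it by a polyhedral norm `x ↦ max_a |⟪f a, x⟫|` whose coefficients are algebraically independent and
which attains its values at the vectors of `X` on different facets. Every one of these values
involves new coefficients, and counting transcendence degrees shows that few of them coincide.

For a generic norm it remains to see that the points `P` have many directions and can be generated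
by few numbers. A linear change of coordinates to a radially isotropic position shows that an
affinely spanning set of `n` points in dimension `d` determines at least `d n / 48` directions. The
coordinates of `P` are generated greedily. Adjoining the coordinates of a point costs `d`
generators, but a point outside the current field lies on at most one line that already occurs as a
direction through a current point, so most of the directions it sees are new. Hence `o(n)` further
generators suffice, unless almost all points of `P` lie on one line. In that case the distances
along the line, together with `O(d²)` numbers, generate those points, and joining them to `d - 1`
further points in general position gives about `(d - 1) n` directions.
-/

section Seminorm

variable {E : Type*} [NormedAddCommGroup E] [NormedSpace ℝ E]

lemma seminorm_le_mul_of_le_one {p q : Seminorm ℝ E} (hq : ∀ x, q x = 0 → x = 0) {s : ℝ}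
    (h : ∀ x, q x ≤ 1 → p x ≤ s) (x : E) : p x ≤ s * q x := by
  obtain rfl | hx := eq_or_ne x 0
  · simp
  have hqx : 0 < q x := (apply_nonneg q x).lt_of_ne fun h0 => hx (hq x h0.symm)
  have hscaled := h ((q x)⁻¹ • x) (by
    rw [map_smul_eq_mul, norm_inv, Real.norm_of_nonneg hqx.le, inv_mul_cancel₀ hqx.ne'])
  rwa [map_smul_eq_mul, norm_inv, Real.norm_of_nonneg hqx.le, inv_mul_le_iff₀ hqx, mul_comm]
    at hscaled

lemma seminorm_le_one_add_mul {p q : Seminorm ℝ E} (hq : ∀ x, q x = 0 → x = 0) {C δ : ℝ}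
    (hC : 0 ≤ C) (hp : ∀ x, p x ≤ C * ‖x‖)
    (h : ∀ y, q y ≤ 1 → ∃ x, p x ≤ 1 ∧ ‖y - x‖ ≤ δ) (y : E) : p y ≤ (1 + C * δ) * q y := by
  refine seminorm_le_mul_of_le_one hq (fun y hy => ?_) y
  obtain ⟨x, hx, hxy⟩ := h y hy
  calc p y = p (x + (y - x)) := by rw [add_sub_cancel]
    _ ≤ p x + p (y - x) := map_add_le_add p _ _
    _ ≤ 1 + C * δ := add_le_add hx ((hp _).trans (by gcongr))

variable [FiniteDimensional ℝ E]

lemma seminorm_continuous (p : Seminorm ℝ E) : Continuous p :=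
  p.convexOn.locallyLipschitz.continuous

lemma exists_seminorm_le_mul_norm (p : Seminorm ℝ E) :
    ∃ u, ‖u‖ ≤ 1 ∧ ∀ x, p x ≤ p u * ‖x‖ := by
  have : ProperSpace E := FiniteDimensional.proper_real E
  obtain ⟨u, hu, hmax⟩ := (isCompact_closedBall (0 : E) 1).exists_isMaxOn
    ⟨0, by simp⟩ (seminorm_continuous p).continuousOn
  refine ⟨u, by simpa using hu, seminorm_le_mul_of_le_one (q := normSeminorm ℝ E)
    (fun x (hx : ‖x‖ = 0) => norm_eq_zero.mp hx) fun x hx => hmax (by simpa using hx)⟩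

lemma exists_pos_mul_norm_le_seminorm {p : Seminorm ℝ E} (hp : ∀ x, p x = 0 → x = 0) :
    ∃ c > 0, ∀ x, c * ‖x‖ ≤ p x := by
  have : ProperSpace E := FiniteDimensional.proper_real E
  obtain ⟨c, hc, hmin⟩ := (isCompact_sphere (0 : E) 1).exists_forall_le'
    (seminorm_continuous p).continuousOn (a := 0) fun x hx =>
      (apply_nonneg p x).lt_of_ne fun h0 => by simp [hp x h0.symm] at hx
  refine ⟨c, hc, fun x => ?_⟩
  obtain rfl | hx := eq_or_ne x 0
  · simp
  have hunit := hmin (‖x‖⁻¹ • x) (by simp [norm_smul, hx])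
  rwa [map_smul_eq_mul, norm_inv, norm_norm, inv_mul_eq_div, le_div_iff₀ (norm_pos_iff.mpr hx)]
    at hunit

end Seminorm

namespace NormOn

open Metric
open scoped ENNReal

variable {d : ℕ}

lemma pos (N : NormOn d) {x : EuclideanSpace ℝ (Fin d)} (hx : x ≠ 0) : 0 < N.1 x :=
  (apply_nonneg N.1 x).lt_of_ne fun h => hx (N.2 x h.symm)

lemma exists_norm_sub_le_of_edist_lt {N M : NormOn d} {δ : ℝ} (hδ : 0 < δ)
    (h : edist N M < ENNReal.ofReal δ) {x : EuclideanSpace ℝ (Fin d)} (hx : N.1 x ≤ 1) :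
    ∃ y, M.1 y ≤ 1 ∧ ‖x - y‖ ≤ δ := by
  obtain ⟨y, hy, hxy⟩ := exists_edist_lt_of_hausdorffEDist_lt (show x ∈ N.unitBall from hx) h
  rw [edist_dist, ENNReal.ofReal_lt_ofReal_iff hδ, dist_eq_norm] at hxy
  exact ⟨y, hy, hxy.le⟩

lemma exists_abs_sub_le_of_edist_lt (N : NormOn d) {ε : ℝ} (hε : 0 < ε) :
    ∃ δ : ℝ≥0∞, 0 < δ ∧ ∀ M : NormOn d, edist M N < δ → ∀ x, |M.1 x - N.1 x| ≤ ε * ‖x‖ := by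
  obtain ⟨C, hC, hN⟩ : ∃ C > 0, ∀ x, N.1 x ≤ C * ‖x‖ := by
    obtain ⟨u, -, hu⟩ := exists_seminorm_le_mul_norm N.1
    exact ⟨N.1 u + 1, by positivity, fun x => (hu x).trans (by gcongr; simp)⟩
  obtain ⟨δ, hδ, hδC, hδε⟩ : ∃ δ > 0, C * δ ≤ 1 / 2 ∧ 2 * C * C * δ ≤ ε :=
    ⟨min (1 / (2 * C)) (ε / (2 * C * C)), by positivity,
      (mul_le_mul_of_nonneg_left (min_le_left _ _) hC.le).trans (by field_simp; rfl),
      (mul_le_mul_of_nonneg_left (min_le_right _ _) (by positivity)).trans (by field_simp; rfl)⟩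
  refine ⟨ENNReal.ofReal δ, by simpa using hδ, fun M hMN x => ?_⟩
  obtain ⟨u, hu, hM⟩ := exists_seminorm_le_mul_norm M.1
  have hNM : N.1 x ≤ (1 + C * δ) * M.1 x := seminorm_le_one_add_mul M.2 hC.le hN
    (fun y hy => exists_norm_sub_le_of_edist_lt hδ hMN hy) x
  have hMN' : ∀ y, M.1 y ≤ (1 + M.1 u * δ) * N.1 y :=
    seminorm_le_one_add_mul N.2 (apply_nonneg _ _) hM
      fun y hy => exists_norm_sub_le_of_edist_lt hδ (by rwa [edist_comm]) hy
  have hNu : N.1 u ≤ C := (hN u).trans (mul_le_of_le_one_right hC.le hu)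
  have hMu : M.1 u ≤ 2 * C := by
    have : (1 + M.1 u * δ) * N.1 u ≤ (1 + M.1 u * δ) * C := by gcongr
    nlinarith [hMN' u, mul_le_mul_of_nonneg_left hδC (apply_nonneg M.1 u)]
  have hupper : M.1 x - N.1 x ≤ 2 * C * C * δ * ‖x‖ := calc
    M.1 x - N.1 x ≤ M.1 u * δ * N.1 x := by linarith [hMN' x]
    _ ≤ 2 * C * δ * (C * ‖x‖) := by gcongr; exact hN x
    _ = 2 * C * C * δ * ‖x‖ := by ring
  have hlower : N.1 x - M.1 x ≤ 2 * C * C * δ * ‖x‖ := calc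
    N.1 x - M.1 x ≤ C * δ * M.1 x := by linarith
    _ ≤ C * δ * (2 * C * ‖x‖) := by gcongr; exact (hM x).trans (by gcongr)
    _ = 2 * C * C * δ * ‖x‖ := by ring
  have hε' : 2 * C * C * δ * ‖x‖ ≤ ε * ‖x‖ := by gcongr
  exact abs_le.mpr ⟨by linarith, by linarith⟩

lemma exists_mem_unitBall_edist_le {N M : NormOn d} {c ε : ℝ} (hc : 0 < c) (hε : 0 ≤ ε)
    (hN : ∀ x, c * ‖x‖ ≤ N.1 x) (hMN : ∀ x, M.1 x ≤ N.1 x + ε * ‖x‖)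
    {x : EuclideanSpace ℝ (Fin d)} (hx : x ∈ N.unitBall) :
    ∃ y ∈ M.unitBall, edist x y ≤ ENNReal.ofReal (ε / c ^ 2) := by
  have hx1 : N.1 x ≤ 1 := hx
  have hxc : ‖x‖ ≤ 1 / c := by rw [le_div_iff₀' hc]; exact (hN x).trans hx1
  set t := ε / c
  have ht : 0 ≤ t := by positivity
  refine ⟨(1 + t)⁻¹ • x, ?_, ?_⟩
  · change M.1 ((1 + t)⁻¹ • x) ≤ 1
    rw [map_smul_eq_mul, norm_inv, Real.norm_of_nonneg (by positivity),
      inv_mul_le_iff₀ (by positivity), mul_one]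
    calc M.1 x ≤ N.1 x + ε * ‖x‖ := hMN x
      _ ≤ 1 + ε * (1 / c) := by gcongr
      _ = 1 + t := by rw [mul_one_div]
  · rw [edist_dist, dist_eq_norm]
    apply ENNReal.ofReal_le_ofReal
    have hsub : x - (1 + t)⁻¹ • x = (t / (1 + t)) • x := by
      rw [show t / (1 + t) = 1 - (1 + t)⁻¹ by field_simp; ring, sub_smul, one_smul]
    calc ‖x - (1 + t)⁻¹ • x‖ = t / (1 + t) * ‖x‖ := by
          rw [hsub, norm_smul, Real.norm_of_nonneg (by positivity)]
      _ ≤ t * (1 / c) := by gcongr; exact div_le_self ht (by linarith)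
      _ = ε / c ^ 2 := by rw [mul_one_div, div_div, sq]

lemma exists_edist_lt_of_abs_sub_le (N : NormOn d) {r : ℝ≥0∞} (hr : 0 < r) :
    ∃ ε > 0, ∀ M : NormOn d, (∀ x, |M.1 x - N.1 x| ≤ ε * ‖x‖) → edist M N < r := by
  obtain ⟨c, hc, hN⟩ := exists_pos_mul_norm_le_seminorm N.2
  obtain ⟨s, hs, hsr⟩ := ENNReal.lt_iff_exists_nnreal_btwn.mp hr
  have hs : 0 < (s : ℝ) := by exact_mod_cast hs
  obtain ⟨ε, hε, hεc, hεs⟩ : ∃ ε > 0, ε ≤ c / 2 ∧ ε ≤ s * (c / 2) ^ 2 :=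
    ⟨min (c / 2) (s * (c / 2) ^ 2), by positivity, min_le_left _ _, min_le_right _ _⟩
  refine ⟨ε, hε, fun M hM => lt_of_le_of_lt ?_ hsr⟩
  have hM' : ∀ x, c / 2 * ‖x‖ ≤ M.1 x := fun x => by
    have := mul_le_mul_of_nonneg_right hεc (norm_nonneg x)
    linarith [(abs_le.mp (hM x)).1, hN x]
  have hN' : ∀ x, c / 2 * ‖x‖ ≤ N.1 x := fun x =>
    (mul_le_mul_of_nonneg_right (by linarith) (norm_nonneg x)).trans (hN x)
  have hbound : ENNReal.ofReal (ε / (c / 2) ^ 2) ≤ s := by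
    rw [← ENNReal.ofReal_coe_nnreal]
    exact ENNReal.ofReal_le_ofReal ((div_le_iff₀ (by positivity)).mpr hεs)
  refine hausdorffEDist_le_of_mem_edist (fun x hx => ?_) fun x hx => ?_
  · obtain ⟨y, hy, hxy⟩ := exists_mem_unitBall_edist_le (M := N) (by positivity) hε.le hM'
      (fun x => by linarith [(abs_le.mp (hM x)).1]) hx
    exact ⟨y, hy, hxy.trans hbound⟩
  · obtain ⟨y, hy, hxy⟩ := exists_mem_unitBall_edist_le (M := M) (by positivity) hε.le hN'
      (fun x => by linarith [(abs_le.mp (hM x)).2]) hx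
    exact ⟨y, hy, hxy.trans hbound⟩

lemma continuous_eval : Continuous fun q : NormOn d × EuclideanSpace ℝ (Fin d) => q.1.1 q.2 := by
  refine continuous_iff_continuousAt.mpr fun ⟨N, x⟩ => Metric.tendsto_nhds.mpr fun ε hε => ?_
  obtain ⟨η, hη, hηε⟩ : ∃ η > 0, η * (‖x‖ + 1) ≤ ε / 2 :=
    ⟨ε / 2 / (‖x‖ + 1), by positivity, by field_simp; rfl⟩
  obtain ⟨δ, hδ, hM⟩ := N.exists_abs_sub_le_of_edist_lt hη
  have hnorm : ∀ᶠ y in nhds x, ‖y‖ < ‖x‖ + 1 :=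
    continuous_norm.continuousAt.eventually_lt continuousAt_const (by simp)
  have hNy : ∀ᶠ y in nhds x, dist (N.1 y) (N.1 x) < ε / 2 :=
    Metric.tendsto_nhds.mp (seminorm_continuous N.1).continuousAt _ (by positivity)
  filter_upwards [prod_mem_nhds (eball_mem_nhds N hδ) (hnorm.and hNy)] with ⟨M, y⟩ ⟨hMN, hy, hNy⟩
  calc dist (M.1 y) (N.1 x) ≤ dist (M.1 y) (N.1 y) + dist (N.1 y) (N.1 x) := dist_triangle _ _ _
    _ < ε / 2 + ε / 2 := add_lt_add_of_le_of_lt ((hM M hMN y).trans ?_) hNy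
    _ = ε := add_halves ε
  exact (mul_le_mul_of_nonneg_left hy.le hη.le).trans hηε

end NormOn

section AlgebraicIndependence

lemma card_le_of_algebraicIndependent {F L ι : Type*} [Field F] [Field L] [Algebra F L]
    [Fintype ι] {g : ι → L} (hg : AlgebraicIndependent F g) (S : Finset L)
    (hS : ∀ i, g i ∈ IntermediateField.adjoin F (S : Set L)) : Fintype.card ι ≤ S.card := by
  let M := AlgebraicIndependent.matroid F L
  have hindep : M.Indep (Set.range g) :=
    AlgebraicIndependent.matroid_indep_iff.mpr hg.coe_range
  have hclosure : Set.range g ⊆ M.closure S := by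
    rintro _ ⟨i, rfl⟩
    obtain ⟨r, hr, s, hs, hrs⟩ := IntermediateField.mem_adjoin_iff_div.mp (hS i)
    rw [AlgebraicIndependent.matroid_closure_eq, hrs, div_eq_mul_inv]
    have halg {x : L} (hx : x ∈ Algebra.adjoin F (S : Set L)) :
        IsAlgebraic (Algebra.adjoin F (S : Set L)) x :=
      isAlgebraic_algebraMap (⟨x, hx⟩ : Algebra.adjoin F (S : Set L))
    exact (halg hr).mul (halg hs).inv
  have hrank : (Fintype.card ι : ℕ∞) ≤ S.card := calc
    (Fintype.card ι : ℕ∞) = (Set.range g).encard := by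
      rw [← Set.image_univ, hg.injective.encard_image, Set.encard_univ,
        ENat.card_eq_coe_fintype_card]
    _ = M.eRk (Set.range g) := hindep.eRk_eq_encard.symm
    _ ≤ M.eRk S := (M.eRk_mono hclosure).trans_eq (M.eRk_closure_eq _)
    _ ≤ (S : Set L).encard := M.eRk_le_encard _
    _ = S.card := Set.encard_coe_eq_coe_finsetCard S
  exact_mod_cast hrank

instance countable_mvPolynomial_rat (σ : Type*) [Finite σ] : Countable (MvPolynomial σ ℚ) := by
  rw [← Cardinal.mk_le_aleph0_iff]
  exact MvPolynomial.cardinalMk_le_max_lift.trans (by simp)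

lemma continuous_mvPolynomial_aeval {σ : Type*} (P : MvPolynomial σ ℚ) :
    Continuous fun z : σ → ℝ => MvPolynomial.aeval z P := by
  simp_rw [MvPolynomial.aeval_def, MvPolynomial.eval₂_eq_eval_map]
  exact MvPolynomial.continuous_eval _

lemma dense_setOf_aeval_ne_zero {σ : Type*} [Finite σ] {P : MvPolynomial σ ℚ} (hP : P ≠ 0) :
    Dense {z : σ → ℝ | MvPolynomial.aeval z P ≠ 0} := by
  have := Fintype.ofFinite σ
  rw [Metric.dense_iff]
  intro z r hr
  by_contra! hempty
  apply hP
  apply MvPolynomial.map_injective (algebraMap ℚ ℝ) (algebraMap ℚ ℝ).injective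
  rw [map_zero]
  refine MvPolynomial.funext_set (fun i => Metric.ball (z i) r)
    (fun i => infinite_of_mem_nhds _ (Metric.ball_mem_nhds _ hr)) fun y hy => ?_
  rw [← ball_pi _ hr] at hy
  by_contra hne
  refine hempty.subset ⟨hy, ?_⟩
  rwa [map_zero, MvPolynomial.eval_map, ← MvPolynomial.aeval_def] at hne

lemma dense_setOf_algebraicIndependent (σ : Type*) [Finite σ] :
    Dense {z : σ → ℝ | AlgebraicIndependent ℚ z} := by
  have hinter : {z : σ → ℝ | AlgebraicIndependent ℚ z} =
      ⋂ P : {P : MvPolynomial σ ℚ // P ≠ 0}, {z | MvPolynomial.aeval z P.1 ≠ 0} := by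
    ext z
    simp only [Set.mem_ofPred_eq, Set.mem_iInter, Subtype.forall, algebraicIndependent_iff]
    exact forall_congr' fun P => not_imp_not.symm
  rw [hinter]
  exact dense_iInter_of_isOpen
    (fun P => isOpen_ne_fun (continuous_mvPolynomial_aeval P.1) continuous_const)
    fun P => dense_setOf_aeval_ne_zero P.2

lemma dense_setOf_algebraicIndependent_coords (ι κ : Type*) [Finite ι] [Finite κ] :
    Dense {f : ι → EuclideanSpace ℝ κ | AlgebraicIndependent ℚ fun q : ι × κ => f q.1 q.2} := by
  have := Fintype.ofFinite ι
  have := Fintype.ofFinite κ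
  let Φ : (ι → EuclideanSpace ℝ κ) →ₗ[ℝ] (ι × κ → ℝ) :=
    { toFun := fun f q => f q.1 q.2
      map_add' := fun _ _ => rfl
      map_smul' := fun _ _ => rfl }
  exact (dense_setOf_algebraicIndependent (ι × κ)).preimage
    (Φ.isOpenMap_of_finiteDimensional fun g => ⟨fun i => WithLp.toLp 2 fun c => g (i, c), rfl⟩)

lemma card_le_of_abs_inner_mem {ι κ : Type*} [Fintype ι] [Fintype κ]
    {f x : ι → EuclideanSpace ℝ κ} (hf : AlgebraicIndependent ℚ fun q : ι × κ => f q.1 q.2)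
    (hx : ∀ i, x i ≠ 0) (Z R : Finset ℝ)
    (hZ : ∀ i c, x i c ∈ IntermediateField.adjoin ℚ (Z : Set ℝ))
    (hR : ∀ i, |inner ℝ (f i) (x i)| ∈ R) : Fintype.card ι ≤ Z.card + R.card := by
  classical
  have hpivot : ∀ i, ∃ c, x i c ≠ 0 := fun i => by
    by_contra! h
    exact hx i (PiLp.ext h)
  choose pivot hpivot using hpivot
  let rest : Finset (ι × κ) := {q | q.2 ≠ pivot q.1}
  let S := Z ∪ R ∪ rest.image fun q => f q.1 q.2
  set K := IntermediateField.adjoin ℚ (S : Set ℝ)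
  have hS : ∀ s ∈ S, s ∈ K := fun s hs => IntermediateField.subset_adjoin ℚ _ hs
  have hZS : Z ⊆ S := Finset.subset_union_left.trans Finset.subset_union_left
  have hRS : R ⊆ S := Finset.subset_union_right.trans Finset.subset_union_left
  have hxK : ∀ i c, x i c ∈ K := fun i c =>
    IntermediateField.adjoin.mono ℚ _ _ (Finset.coe_subset.mpr hZS) (hZ i c)
  have hrestK : ∀ i c, c ≠ pivot i → f i c ∈ K := fun i c hc =>
    hS _ (Finset.mem_union_right _ (Finset.mem_image.mpr ⟨(i, c), by simpa [rest] using hc, rfl⟩))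
  have hinnerK : ∀ i, inner ℝ (f i) (x i) ∈ K := fun i => by
    have habs : |inner ℝ (f i) (x i)| ∈ K := hS _ (hRS (hR i))
    rcases abs_choice (inner ℝ (f i) (x i)) with h | h
    · rwa [← h]
    · simpa [h] using neg_mem habs
  have hpivotK : ∀ i, f i (pivot i) ∈ K := fun i => by
    have hsum : inner ℝ (f i) (x i) = f i (pivot i) * x i (pivot i) +
        ∑ c ∈ Finset.univ.erase (pivot i), f i c * x i c := by
      rw [Finset.add_sum_erase _ (fun c => f i c * x i c) (Finset.mem_univ _), PiLp.inner_apply]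
      exact Finset.sum_congr rfl fun c _ => mul_comm _ _
    rw [← div_eq_iff (hpivot i) |>.mpr (sub_eq_of_eq_add hsum)]
    exact div_mem (sub_mem (hinnerK i) (sum_mem fun c hc =>
      mul_mem (hrestK i c (Finset.ne_of_mem_erase hc)) (hxK i c))) (hxK i _)
  have hcard : Fintype.card (ι × κ) ≤ S.card := card_le_of_algebraicIndependent hf S fun q => by
    obtain h | h := eq_or_ne q.2 (pivot q.1)
    · rw [h]; exact hpivotK q.1
    · exact hrestK q.1 q.2 h
  have hS_card : S.card ≤ Z.card + R.card + rest.card :=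
    (Finset.card_union_le _ _).trans (add_le_add (Finset.card_union_le _ _) Finset.card_image_le)
  have hpivots : Fintype.card ι ≤ restᶜ.card := by
    rw [← Finset.card_univ]
    exact Finset.card_le_card_of_injOn (fun i => (i, pivot i)) (by simp [rest])
      fun i _ j _ h => congrArg Prod.fst h
  have := rest.card_add_card_compl
  omega

end AlgebraicIndependence

section PolyhedralSeminorm

/-- The seminorm `x ↦ max_a |⟪f a, x⟫|`, whose unit ball is the symmetric polyhedron with facet
normals `± f a`. -/
noncomputable def polyhedralSeminorm {ι E : Type*} [Fintype ι] [NormedAddCommGroup E]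
    [InnerProductSpace ℝ E] (f : ι → E) : Seminorm ℝ E :=
  Finset.univ.sup fun a => (innerₛₗ ℝ (f a)).toSeminorm

section

variable {ι E : Type*} [Fintype ι] [NormedAddCommGroup E] [InnerProductSpace ℝ E] {f g : ι → E}
  {x : E}

lemma abs_inner_le_polyhedralSeminorm (f : ι → E) (a : ι) (x : E) :
    |inner ℝ (f a) x| ≤ polyhedralSeminorm f x :=
  Seminorm.le_finset_sup_apply (p := fun a => (innerₛₗ ℝ (f a)).toSeminorm) (Finset.mem_univ a)

lemma polyhedralSeminorm_le {c : ℝ} (hc : 0 ≤ c) (h : ∀ a, |inner ℝ (f a) x| ≤ c) :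
    polyhedralSeminorm f x ≤ c :=
  Seminorm.finset_sup_apply_le hc fun a _ => h a

lemma exists_abs_inner_eq_polyhedralSeminorm (hx : polyhedralSeminorm f x ≠ 0) :
    ∃ a, |inner ℝ (f a) x| = polyhedralSeminorm f x := by
  obtain ⟨a, -, ha⟩ := (Seminorm.zero_or_exists_apply_eq_finset_sup
    (fun a => (innerₛₗ ℝ (f a)).toSeminorm) Finset.univ x).resolve_left hx
  exact ⟨a, ha.symm⟩

lemma polyhedralSeminorm_le_add {τ : ℝ} (hτ : 0 ≤ τ) (h : ∀ a, ‖f a - g a‖ ≤ τ) :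
    polyhedralSeminorm f x ≤ polyhedralSeminorm g x + τ * ‖x‖ := by
  refine polyhedralSeminorm_le (by positivity) fun a => ?_
  calc |inner ℝ (f a) x|
    _ = |inner ℝ (g a) x + inner ℝ (f a - g a) x| := by rw [← inner_add_left, add_sub_cancel]
    _ ≤ |inner ℝ (g a) x| + |inner ℝ (f a - g a) x| := abs_add_le _ _
    _ ≤ polyhedralSeminorm g x + τ * ‖x‖ := add_le_add (abs_inner_le_polyhedralSeminorm g a x)
        ((abs_real_inner_le_norm _ _).trans (by gcongr; exact h a))

variable [FiniteDimensional ℝ E]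

lemma exists_abs_inner_le_seminorm (p : Seminorm ℝ E) (u : E) :
    ∃ v : E, inner ℝ v u = p u ∧ ∀ x, |inner ℝ v x| ≤ p x := by
  obtain rfl | hu := eq_or_ne u 0
  · exact ⟨0, by simp, by simp⟩
  obtain ⟨φ, hφ, hφp⟩ := Module.Dual.exists_extension_of_le_seminorm_real (ℝ ∙ u)
    (p u • (LinearEquiv.coord ℝ E u hu).toLinearMap) (p := p) fun x => by
      rw [← LinearEquiv.coord_apply_smul ℝ E u hu x]
      rw [map_smul_eq_mul, mul_comm]
      exact mul_le_mul_of_nonneg_left (le_abs_self _) (apply_nonneg p u)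
  have hinner (x : E) : inner ℝ ((InnerProductSpace.toDual ℝ E).symm
      (LinearMap.toContinuousLinearMap φ)) x = φ x := InnerProductSpace.toDual_symm_apply
  refine ⟨_, (hinner u).trans ?_, fun x => (hinner x).symm ▸ hφp x⟩
  simpa using (hφ ⟨u, Submodule.mem_span_singleton_self u⟩).trans
    (by simp [LinearEquiv.coord_self ℝ E u hu])

lemma exists_polyhedralSeminorm_approx (p : Seminorm ℝ E) {τ : ℝ} (hτ : 0 < τ) :
    ∃ s : Finset E, ∀ x, polyhedralSeminorm (fun v : s => (v : E)) x ≤ p x ∧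
      p x ≤ polyhedralSeminorm (fun v : s => (v : E)) x + τ * ‖x‖ := by
  classical
  choose v hv hvp using exists_abs_inner_le_seminorm p
  obtain ⟨t, -, ht⟩ := (isCompact_sphere (0 : E) 1).elim_nhds_subcover
    (fun u => {x | p x < inner ℝ (v u) x + τ}) fun u _ =>
      (seminorm_continuous p).continuousAt.eventually_lt (by fun_prop) (by simp [hv, hτ])
  refine ⟨t.image v, fun x => ⟨polyhedralSeminorm_le (apply_nonneg p x) fun a => ?_, ?_⟩⟩
  · obtain ⟨u, -, hu⟩ := Finset.mem_image.mp a.2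
    exact hu ▸ hvp u x
  obtain rfl | hx := eq_or_ne x 0
  · simp
  have hx' : 0 < ‖x‖ := norm_pos_iff.mpr hx
  obtain ⟨u, hut, hu⟩ := Set.mem_iUnion₂.mp
    (ht (show ‖x‖⁻¹ • x ∈ Metric.sphere (0 : E) 1 by simp [norm_smul, hx]))
  have hscaled : ‖x‖⁻¹ * p x < ‖x‖⁻¹ * inner ℝ (v u) x + τ := by
    simpa [map_smul_eq_mul, inner_smul_right] using hu
  calc p x = ‖x‖ * (‖x‖⁻¹ * p x) := (mul_inv_cancel_left₀ hx'.ne' _).symm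
    _ ≤ ‖x‖ * (‖x‖⁻¹ * inner ℝ (v u) x + τ) := by gcongr
    _ = inner ℝ (v u) x + τ * ‖x‖ := by rw [mul_add, mul_inv_cancel_left₀ hx'.ne', mul_comm τ]
    _ ≤ _ := by
      gcongr
      exact (le_abs_self _).trans (abs_inner_le_polyhedralSeminorm
        (fun w : t.image v => (w : E)) ⟨v u, Finset.mem_image_of_mem v hut⟩ x)

end

lemma exists_algebraicIndependent_polyhedralSeminorm_approx {κ : Type*} [Fintype κ]
    (p : Seminorm ℝ (EuclideanSpace ℝ κ)) {τ : ℝ} (hτ : 0 < τ) :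
    ∃ (s : Finset (EuclideanSpace ℝ κ)) (f : s → EuclideanSpace ℝ κ),
      (AlgebraicIndependent ℚ fun q : s × κ => f q.1 q.2) ∧
        ∀ x, |polyhedralSeminorm f x - p x| ≤ τ * ‖x‖ := by
  obtain ⟨s, hs⟩ := exists_polyhedralSeminorm_approx p (half_pos hτ)
  obtain ⟨f, hf, hfs⟩ := Metric.dense_iff.mp (dense_setOf_algebraicIndependent_coords s κ)
    (fun v => v) (τ / 2) (half_pos hτ)
  refine ⟨s, f, hfs, fun x => ?_⟩
  have hclose (a : s) : ‖f a - a‖ ≤ τ / 2 :=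
    (norm_le_pi_norm (f - fun v : s => (v : EuclideanSpace ℝ κ)) a).trans
      (mem_ball_iff_norm.mp hf).le
  have hupper := polyhedralSeminorm_le_add (x := x) (half_pos hτ).le hclose
  have hlower := polyhedralSeminorm_le_add (x := x) (half_pos hτ).le
    fun a => (norm_sub_rev _ _).trans_le (hclose a)
  rw [abs_le]
  constructor <;> linarith [hs x, mul_nonneg hτ.le (norm_nonneg x)]

end PolyhedralSeminorm

section Nonparallel

open Filter Topology

variable {ι E : Type*} [NormedAddCommGroup E] [InnerProductSpace ℝ E]

/-- The vectors `x i` are nonzero and span pairwise distinct lines. -/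
def PairwiseNonparallel (x : ι → E) : Prop :=
  (∀ i, x i ≠ 0) ∧ Pairwise fun i j => LinearIndependent ℝ ![x i, x j]

lemma isOpen_setOf_pairwiseNonparallel [Finite ι] :
    IsOpen {x : ι → E | PairwiseNonparallel x} := by
  simp only [PairwiseNonparallel, Pairwise, Set.ofPred_and, Set.ofPred_forall]
  refine IsOpen.inter
    (isOpen_iInter_of_finite fun i => isOpen_ne_fun (continuous_apply i) continuous_const)
    (isOpen_iInter_of_finite fun i => isOpen_iInter_of_finite fun j =>
      isOpen_iInter_of_finite fun _ => ?_)
  have hcont : Continuous fun x : ι → E => ![x i, x j] := by fun_prop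
  exact isOpen_setOfPred_linearIndependent.preimage hcont

lemma exists_norm_add_le_and_norm_sub_le [Finite ι] {X : Set (ι → E)} (hX : IsCompact X)
    (hpar : ∀ x ∈ X, PairwiseNonparallel x) :
    ∃ γ ∈ Set.Ioo (0 : ℝ) 1, ∀ x ∈ X, ∀ i j, i ≠ j →
      ‖x i + x j‖ ≤ (1 - γ) * (‖x i‖ + ‖x j‖) ∧ ‖x i - x j‖ ≤ (1 - γ) * (‖x i‖ + ‖x j‖) := by
  suffices h : ∀ i j, i ≠ j → ∀ᶠ γ in 𝓝[>] (0 : ℝ), ∀ x ∈ X,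
      ‖x i + x j‖ ≤ (1 - γ) * (‖x i‖ + ‖x j‖) ∧ ‖x i - x j‖ ≤ (1 - γ) * (‖x i‖ + ‖x j‖) by
    have hall := eventually_all.mpr fun i => eventually_all.mpr fun j => eventually_all.mpr (h i j)
    obtain ⟨γ, hγ, h⟩ := ((eventually_mem_set.mpr (Ioo_mem_nhdsGT one_pos)).and hall).exists
    exact ⟨γ, hγ, fun x hx i j hij => h i j hij x hx⟩
  intro i j hij
  have hpos (x) (hx : x ∈ X) : 0 < ‖x i‖ + ‖x j‖ :=
    add_pos (norm_pos_iff.mpr ((hpar x hx).1 i)) (norm_pos_iff.mpr ((hpar x hx).1 j))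
  have hcont : ContinuousOn (fun x : ι → E =>
      1 - max ‖x i + x j‖ ‖x i - x j‖ / (‖x i‖ + ‖x j‖)) X :=
    continuousOn_const.sub
      (ContinuousOn.div (by fun_prop) (by fun_prop) fun x hx => (hpos x hx).ne')
  obtain ⟨γ, hγ, hle⟩ := hX.exists_forall_le' hcont (a := 0) fun x hx => by
    have hind := not_not.mpr ((hpar x hx).2 hij)
    rw [← sameRay_or_sameRay_neg_iff_not_linearIndependent, not_or] at hind
    have hadd := norm_add_lt_of_not_sameRay hind.1
    have hsub := norm_add_lt_of_not_sameRay hind.2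
    rw [← sub_eq_add_neg, norm_neg] at hsub
    rw [sub_pos, div_lt_one (hpos x hx)]
    exact max_lt hadd hsub
  filter_upwards [Ioo_mem_nhdsGT hγ] with δ hδ x hx
  rw [← max_le_iff, ← div_le_iff₀ (hpos x hx)]
  linarith [hle x hx, hδ.2]

end Nonparallel

section GenericNorms

open scoped ENNReal NNReal

lemma polyhedralSeminorm_add_le_of_common_facet {ι E : Type*} [Fintype ι] [NormedAddCommGroup E]
    [InnerProductSpace ℝ E] {f : ι → E} {a : ι} {x y : E}
    (hx : |inner ℝ (f a) x| = polyhedralSeminorm f x)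
    (hy : |inner ℝ (f a) y| = polyhedralSeminorm f y) :
    polyhedralSeminorm f x + polyhedralSeminorm f y ≤ polyhedralSeminorm f (x + y) ∨
      polyhedralSeminorm f x + polyhedralSeminorm f y ≤ polyhedralSeminorm f (x - y) := by
  have hadd := abs_inner_le_polyhedralSeminorm f a (x + y)
  have hsub := abs_inner_le_polyhedralSeminorm f a (x - y)
  rw [inner_add_right] at hadd
  rw [inner_sub_right] at hsub
  rw [← hx, ← hy]
  rcases abs_cases (inner ℝ (f a) x) with h | h <;> rcases abs_cases (inner ℝ (f a) y) with h' | h'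
  · exact .inl (by linarith [le_abs_self (inner ℝ (f a) x + inner ℝ (f a) y)])
  · exact .inr (by linarith [le_abs_self (inner ℝ (f a) x - inner ℝ (f a) y)])
  · exact .inr (by linarith [neg_le_abs (inner ℝ (f a) x - inner ℝ (f a) y)])
  · exact .inl (by linarith [neg_le_abs (inner ℝ (f a) x + inner ℝ (f a) y)])

variable {d : ℕ} {ι : Type*}

-- Adding `η‖·‖` makes the norm uniformly strictly convex on the compact set, so that nonparallel
-- vectors lie over different facets of any sufficiently close polyhedral norm.
lemma NormOn.exists_polyhedral_near [Finite ι] (N : NormOn d) {r : ℝ≥0∞} (hr : 0 < r)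
    {X : Set (ι → EuclideanSpace ℝ (Fin d))} (hX : IsCompact X)
    (hpar : ∀ x ∈ X, PairwiseNonparallel x) :
    ∃ (M : NormOn d) (s : Finset (EuclideanSpace ℝ (Fin d))) (f : s → EuclideanSpace ℝ (Fin d)),
      edist M N < r ∧ (AlgebraicIndependent ℚ fun q : s × Fin d => f q.1 q.2) ∧
        ∀ x ∈ X, ∃ a : ι → s, a.Injective ∧ ∀ i, |inner ℝ (f (a i)) (x i)| = M.1 (x i) := by
  obtain ⟨ε, hε, hnear⟩ := N.exists_edist_lt_of_abs_sub_le hr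
  obtain ⟨γ, ⟨hγ, hγ1⟩, hgap⟩ := exists_norm_add_le_and_norm_sub_le hX hpar
  let η : ℝ≥0 := ⟨ε / 2, by positivity⟩
  obtain ⟨s, f, hf, happrox⟩ := exists_algebraicIndependent_polyhedralSeminorm_approx
    (N.1 + η • normSeminorm ℝ (EuclideanSpace ℝ (Fin d))) (τ := γ * (ε / 2) / 4) (by positivity)
  have hbounds (x : EuclideanSpace ℝ (Fin d)) :
      |polyhedralSeminorm f x - (N.1 x + ε / 2 * ‖x‖)| ≤ γ * (ε / 2) / 4 * ‖x‖ := happrox x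
  have hτ : γ * (ε / 2) / 4 ≤ ε / 2 := by nlinarith
  have hτ' (x : EuclideanSpace ℝ (Fin d)) : γ * (ε / 2) / 4 * ‖x‖ ≤ ε / 2 * ‖x‖ := by gcongr
  have hle (x) : N.1 x ≤ polyhedralSeminorm f x := by
    linarith [(abs_le.mp (hbounds x)).1, hτ' x]
  have hpos {x} (hx : x ≠ 0) : 0 < polyhedralSeminorm f x := (N.pos hx).trans_le (hle x)
  let M : NormOn d := ⟨polyhedralSeminorm f, fun x => not_imp_not.mp fun hx => (hpos hx).ne'⟩
  refine ⟨M, s, f, hnear M fun x => ?_, hf, fun x hx => ?_⟩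
  · exact abs_le.mpr ⟨by linarith [hle x, mul_nonneg hε.le (norm_nonneg x)],
      by linarith [(abs_le.mp (hbounds x)).2, hτ' x]⟩
  choose a ha using fun i => exists_abs_inner_eq_polyhedralSeminorm (hpos ((hpar x hx).1 i)).ne'
  refine ⟨a, fun i j hij => ?_, ha⟩
  by_contra hne
  have hnorm : 0 < ‖x i‖ + ‖x j‖ :=
    add_pos (norm_pos_iff.mpr ((hpar x hx).1 i)) (norm_pos_iff.mpr ((hpar x hx).1 j))
  have hcontra (y) (hy : ‖y‖ ≤ (1 - γ) * (‖x i‖ + ‖x j‖)) (hNy : N.1 y ≤ N.1 (x i) + N.1 (x j)) :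
      ¬ polyhedralSeminorm f (x i) + polyhedralSeminorm f (x j) ≤ polyhedralSeminorm f y := by
    intro h
    have hi := (abs_le.mp (hbounds (x i))).1
    have hj := (abs_le.mp (hbounds (x j))).1
    have hy' := (abs_le.mp (hbounds y)).2
    have hprod : 0 < γ * (ε / 2) * (‖x i‖ + ‖x j‖) := by positivity
    nlinarith [mul_le_mul_of_nonneg_left hy hε.le, mul_le_mul_of_nonneg_left hy (mul_pos hγ hε).le,
      mul_pos hγ hprod]
  rcases polyhedralSeminorm_add_le_of_common_facet (ha i) (hij ▸ ha j) with h | h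
  · exact hcontra _ (hgap x hx i j hne).1 (map_add_le_add N.1 _ _) h
  · exact hcontra _ (hgap x hx i j hne).2 (map_sub_le_add N.1 _ _) h

lemma isClosed_setOf_card_image_le {ι α : Type*} [Fintype ι] [TopologicalSpace α] [T2Space α]
    [Nonempty α] [DecidableEq α] (k : ℕ) :
    IsClosed {y : ι → α | (Finset.univ.image y).card ≤ k} := by
  have hunion : {y : ι → α | (Finset.univ.image y).card ≤ k} =
      ⋃ κ : ι → Fin k, {y | y.FactorsThrough κ} := by
    ext y
    simp only [Set.mem_ofPred_eq, Set.mem_iUnion]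
    constructor
    · intro h
      obtain ⟨e⟩ := Function.Embedding.nonempty_of_card_le
        (α := Finset.univ.image y) (β := Fin k) (by simpa using h)
      refine ⟨fun i => e ⟨y i, Finset.mem_image_of_mem y (Finset.mem_univ i)⟩, fun i j hij => ?_⟩
      exact congrArg Subtype.val (e.injective hij)
    · rintro ⟨κ, hκ⟩
      obtain ⟨e, rfl⟩ := (Function.factorsThrough_iff y).mp hκ
      rw [← Finset.image_image]
      exact Finset.card_image_le.trans ((Finset.card_le_univ _).trans_eq (Fintype.card_fin k))
  rw [hunion]
  refine isClosed_iUnion_of_finite fun κ => ?_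
  simp only [Function.FactorsThrough, Set.ofPred_forall]
  exact isClosed_iInter fun i => isClosed_iInter fun j => isClosed_iInter fun _ =>
    isClosed_eq (continuous_apply i) (continuous_apply j)

variable [Fintype ι] {X : Set (ι → EuclideanSpace ℝ (Fin d))} {m k : ℕ}

lemma isNowhereDense_setOf_exists_card_image_le (hX : IsCompact X)
    (hpar : ∀ x ∈ X, PairwiseNonparallel x)
    (hrat : ∀ x ∈ X, ∃ z : Fin m → ℝ, ∀ i c, x i c ∈ IntermediateField.adjoin ℚ (Set.range z))
    (hcard : m + k < Fintype.card ι) :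
    IsNowhereDense {N : NormOn d | ∃ x ∈ X, (Finset.univ.image fun i => N.1 (x i)).card ≤ k} := by
  let R : SetRel (NormOn d) (ι → EuclideanSpace ℝ (Fin d)) :=
    {q | (Finset.univ.image fun i => q.1.1 (q.2 i)).card ≤ k}
  have hR : IsClosed R := (isClosed_setOf_card_image_le k).preimage (continuous_pi fun i =>
    NormOn.continuous_eval.comp (continuous_fst.prodMk ((continuous_apply i).comp continuous_snd)))
  refine ((hR.relPreimage_of_isCompact hX).isNowhereDense_iff).mpr ?_
  rw [interior_eq_empty_iff_dense_compl, EMetric.dense_iff]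
  intro N r hr
  obtain ⟨M, s, f, hMN, hf, hfacet⟩ := N.exists_polyhedral_near hr hX hpar
  refine ⟨M, hMN, ?_⟩
  rintro ⟨x, hx, hle⟩
  obtain ⟨a, ha, hfx⟩ := hfacet x hx
  obtain ⟨z, hz⟩ := hrat x hx
  have hfa : AlgebraicIndependent ℚ fun q : ι × Fin d => f (a q.1) q.2 :=
    hf.comp (Prod.map a id) (ha.prodMap Function.injective_id)
  have hle' := card_le_of_abs_inner_mem (f := f ∘ a) hfa (hpar x hx).1 (Finset.univ.image z)
    (Finset.univ.image fun i => M.1 (x i)) (by simpa using hz) (fun i => by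
      rw [Function.comp_apply, hfx i]
      exact Finset.mem_image_of_mem _ (Finset.mem_univ i))
  have hZ : (Finset.univ.image z).card ≤ m := Finset.card_image_le.trans_eq (Finset.card_fin m)
  change (Finset.univ.image fun i => M.1 (x i)).card ≤ k at hle
  omega

lemma isMeagre_setOf_exists_card_image_le (hX : IsSigmaCompact X)
    (hpar : ∀ x ∈ X, PairwiseNonparallel x)
    (hrat : ∀ x ∈ X, ∃ z : Fin m → ℝ, ∀ i c, x i c ∈ IntermediateField.adjoin ℚ (Set.range z))
    (hcard : m + k < Fintype.card ι) :
    IsMeagre {N : NormOn d | ∃ x ∈ X, (Finset.univ.image fun i => N.1 (x i)).card ≤ k} := by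
  obtain ⟨K, hK, rfl⟩ := hX
  refine (isMeagre_iUnion fun n => (isNowhereDense_setOf_exists_card_image_le (hK n)
    (fun x hx => hpar x (Set.mem_iUnion_of_mem n hx))
    (fun x hx => hrat x (Set.mem_iUnion_of_mem n hx)) hcard).isMeagre).mono ?_
  rintro N ⟨x, hx, hle⟩
  obtain ⟨n, hn⟩ := Set.mem_iUnion.mp hx
  exact Set.mem_iUnion.mpr ⟨n, x, hn, hle⟩

end GenericNorms

section RationalTuples

open MvPolynomial

variable {ι κ : Type*} [Finite ι] [Fintype κ] {m : ℕ}

lemma isSigmaCompact_setOf_eq_aeval_div_aeval (num den : ι → κ → MvPolynomial (Fin m) ℚ) :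
    IsSigmaCompact {x : ι → EuclideanSpace ℝ κ | PairwiseNonparallel x ∧ ∃ z : Fin m → ℝ,
      ∀ i c, aeval z (den i c) ≠ 0 ∧ x i c = aeval z (num i c) / aeval z (den i c)} := by
  let U : Set (Fin m → ℝ) := {z | ∀ i c, aeval z (den i c) ≠ 0}
  let T (z : Fin m → ℝ) (i : ι) : EuclideanSpace ℝ κ :=
    WithLp.toLp 2 fun c => aeval z (num i c) / aeval z (den i c)
  have hU : IsOpen U := by
    simp only [U, Set.ofPred_forall]
    exact isOpen_iInter_of_finite fun i => isOpen_iInter_of_finite fun c =>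
      isOpen_ne_fun (continuous_mvPolynomial_aeval _) continuous_const
  have hT : ContinuousOn T U := continuousOn_pi.mpr fun i =>
    (PiLp.continuous_toLp 2 _).comp_continuousOn (continuousOn_pi.mpr fun c =>
      (continuous_mvPolynomial_aeval _).continuousOn.div
        (continuous_mvPolynomial_aeval _).continuousOn fun z hz => hz i c)
  have hV : IsOpen (U ∩ T ⁻¹' {x | PairwiseNonparallel x}) :=
    hT.isOpen_inter_preimage hU isOpen_setOf_pairwiseNonparallel
  have hVσ : IsSigmaCompact (U ∩ T ⁻¹' {x | PairwiseNonparallel x}) := by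
    rw [isSigmaCompact_iff_sigmaCompactSpace]
    have := hV.locallyCompactSpace
    infer_instance
  convert hVσ.image_of_continuousOn (hT.mono Set.inter_subset_left) using 1
  ext x
  constructor
  · rintro ⟨hpar, z, hz⟩
    have hx : T z = x := funext fun i => PiLp.ext fun c => (hz i c).2.symm
    exact ⟨z, ⟨fun i c => (hz i c).1, by rwa [Set.mem_preimage, hx]⟩, hx⟩
  · rintro ⟨z, ⟨hz, hpar⟩, rfl⟩
    exact ⟨hpar, z, fun i c => ⟨hz i c, rfl⟩⟩

lemma exists_aeval_div_aeval_of_mem_adjoin {σ : Type*} {z : σ → ℝ} {t : ℝ}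
    (ht : t ∈ IntermediateField.adjoin ℚ (Set.range z)) :
    ∃ p q : MvPolynomial σ ℚ, aeval z q ≠ 0 ∧ t = aeval z p / aeval z q := by
  obtain ⟨p, q, hpq⟩ := (IntermediateField.mem_adjoin_range_iff ℚ z t).mp ht
  by_cases hq : aeval z q = 0
  · exact ⟨0, 1, by simp, by simp [hpq, hq]⟩
  · exact ⟨p, q, hq, hpq⟩

lemma isSigmaCompact_setOf_mem_adjoin_range (ι κ : Type*) [Finite ι] [Fintype κ] (m : ℕ) :
    IsSigmaCompact {x : ι → EuclideanSpace ℝ κ | PairwiseNonparallel x ∧ ∃ z : Fin m → ℝ,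
      ∀ i c, x i c ∈ IntermediateField.adjoin ℚ (Set.range z)} := by
  have hunion := isSigmaCompact_iUnion _
    fun P : (ι → κ → MvPolynomial (Fin m) ℚ) × (ι → κ → MvPolynomial (Fin m) ℚ) =>
      isSigmaCompact_setOf_eq_aeval_div_aeval P.1 P.2
  convert hunion using 1
  ext x
  simp only [Set.mem_iUnion, Set.mem_ofPred_eq]
  constructor
  · rintro ⟨hpar, z, hz⟩
    choose num den hz using fun i c => exists_aeval_div_aeval_of_mem_adjoin (hz i c)
    exact ⟨(num, den), hpar, z, hz⟩
  · rintro ⟨P, hpar, z, hz⟩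
    refine ⟨hpar, z, fun i c => ?_⟩
    exact (IntermediateField.mem_adjoin_range_iff ℚ z _).mpr ⟨_, _, (hz i c).2⟩

end RationalTuples

section IsGeneric

open scoped Classical in
/-- A norm is generic if it takes at least `|X| - |Z|` values on every finite set `X` of nonzero,
pairwise nonparallel vectors whose coordinates lie in the field generated by a finite set `Z`. -/
def NormOn.IsGeneric {d : ℕ} (N : NormOn d) : Prop :=
  ∀ (X : Finset (EuclideanSpace ℝ (Fin d))) (Z : Finset ℝ), 0 ∉ X →
    (X : Set (EuclideanSpace ℝ (Fin d))).InjOn (fun x => Submodule.span ℝ {x}) →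
    (∀ x ∈ X, ∀ c, x c ∈ IntermediateField.adjoin ℚ (Z : Set ℝ)) →
    X.card ≤ Z.card + (X.image N.1).card

lemma pairwiseNonparallel_of_injective_span {ι E : Type*} [NormedAddCommGroup E]
    [InnerProductSpace ℝ E] {x : ι → E} (hx : ∀ i, x i ≠ 0)
    (hspan : Function.Injective fun i => Submodule.span ℝ {x i}) : PairwiseNonparallel x := by
  refine ⟨hx, fun i j hij => (LinearIndependent.pair_iff' (hx i)).mpr fun a ha => hij (hspan ?_)⟩
  have ha0 : a ≠ 0 := by rintro rfl; exact hx j (by rw [← ha, zero_smul])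
  simpa only [ha] using (Submodule.span_singleton_smul_eq ha0.isUnit (x i)).symm

theorem isMeagre_setOf_not_isGeneric (d : ℕ) : IsMeagre {N : NormOn d | ¬ N.IsGeneric} := by
  classical
  have hmeagre := isMeagre_iUnion fun q : {q : ℕ × ℕ × ℕ // q.2.1 + q.2.2 < q.1} =>
    isMeagre_setOf_exists_card_image_le (d := d) (k := q.1.2.2)
      (isSigmaCompact_setOf_mem_adjoin_range (Fin q.1.1) (Fin d) q.1.2.1) (fun _ hx => hx.1)
      (fun _ hx => hx.2) (by simpa using q.2)
  refine hmeagre.mono fun N hN => ?_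
  simp only [NormOn.IsGeneric, Set.mem_ofPred_eq, not_forall, not_le] at hN
  obtain ⟨X, Z, h0, hinj, hZ, hlt⟩ := hN
  let x (i : Fin X.card) : EuclideanSpace ℝ (Fin d) := X.equivFin.symm i
  have hxmem (i) : x i ∈ X := (X.equivFin.symm i).2
  let z (i : Fin Z.card) : ℝ := Z.equivFin.symm i
  have hz : Set.range z = Z := by
    rw [show z = Subtype.val ∘ Z.equivFin.symm from rfl, Z.equivFin.symm.surjective.range_comp,
      Subtype.range_coe]
  refine Set.mem_iUnion.mpr ⟨⟨(X.card, Z.card, (X.image N.1).card), hlt⟩, x, ⟨?_, z, ?_⟩, ?_⟩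
  · exact pairwiseNonparallel_of_injective_span (fun i => ne_of_mem_of_not_mem (hxmem i) h0)
      fun i j hij => X.equivFin.symm.injective (Subtype.ext (hinj (hxmem i) (hxmem j) hij))
  · rw [hz]
    exact fun i => hZ _ (hxmem i)
  · refine Finset.card_le_card (Finset.image_subset_iff.mpr fun i _ => ?_)
    exact Finset.mem_image_of_mem _ (hxmem i)

end IsGeneric

section RadialIsotropy

open MeasureTheory
open scoped Finset

lemma sum_le_mul_sum_of_card_superlevel_le {ι : Type*} [Fintype ι] {I : Finset ι} {c : ℝ}
    (hc : 0 ≤ c) {g : ι → ℝ} (hg : ∀ i, 0 ≤ g i)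
    (h : ∀ t > 0, (#{i | t ≤ g i} : ℝ) ≤ c * #{i ∈ I | t ≤ g i}) :
    ∑ i, g i ≤ c * ∑ i ∈ I, g i := by
  have hlayer (s : Finset ι) :
      ENNReal.ofReal (∑ i ∈ s, g i) = ∫⁻ t in Set.Ioi (0 : ℝ), (#{i ∈ s | t ≤ g i} : ENNReal) := by
    have hlevel (i : ι) :
        ENNReal.ofReal (g i) = ∫⁻ t in Set.Ioi (0 : ℝ), (Set.Iic (g i)).indicator 1 t := by
      rw [lintegral_indicator_one measurableSet_Iic, Measure.restrict_apply measurableSet_Iic,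
        Set.inter_comm, Set.Ioi_inter_Iic, Real.volume_Ioc, sub_zero]
    rw [ENNReal.ofReal_sum_of_nonneg fun i _ => hg i, Finset.sum_congr rfl fun i _ => hlevel i,
      ← lintegral_finsetSum _ fun i _ => measurable_one.indicator measurableSet_Iic]
    simp only [Set.indicator_apply, Set.mem_Iic, Pi.one_apply, Finset.sum_boole]
  rw [← ENNReal.ofReal_le_ofReal_iff (mul_nonneg hc (Finset.sum_nonneg fun i _ => hg i)),
    ENNReal.ofReal_mul hc, hlayer, hlayer, ← lintegral_const_mul' _ _ ENNReal.ofReal_ne_top]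
  refine setLIntegral_mono' measurableSet_Ioi fun t ht => ?_
  have hlevel := ENNReal.ofReal_le_ofReal (h t ht)
  rwa [ENNReal.ofReal_mul hc, ENNReal.ofReal_natCast, ENNReal.ofReal_natCast] at hlevel

lemma exists_greedy_linearIndepOn {K ι V α : Type*} [DivisionRing K] [AddCommGroup V] [Module K V]
    [LinearOrder α] (v : ι → V) (g : ι → α) (s : Finset ι) :
    ∃ I ⊆ s, LinearIndepOn K v (I : Set ι) ∧
      ∀ j ∈ s, v j ∈ Submodule.span K (v '' {i | i ∈ I ∧ g j ≤ g i}) := by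
  classical
  induction s using Finset.induction_on_min_value g with
  | empty => exact ⟨∅, by simp⟩
  | insert a s ha hmin ih =>
    obtain ⟨I, hIs, hI, hspan⟩ := ih
    by_cases hva : v a ∈ Submodule.span K (v '' (I : Set ι))
    · refine ⟨I, hIs.trans (Finset.subset_insert _ _), hI, fun j hj => ?_⟩
      obtain rfl | hj := Finset.mem_insert.mp hj
      · refine Submodule.span_mono (Set.image_mono ?_) hva
        exact fun i hi => ⟨hi, hmin i (hIs hi)⟩
      · exact hspan j hj
    · refine ⟨insert a I, Finset.insert_subset_insert _ hIs, ?_, fun j hj => ?_⟩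
      · rw [Finset.coe_insert, linearIndepOn_insert fun h => ha (hIs h)]
        exact ⟨hI, hva⟩
      · obtain rfl | hj := Finset.mem_insert.mp hj
        · exact Submodule.subset_span ⟨j, ⟨Finset.mem_insert_self _ _, le_rfl⟩, rfl⟩
        · refine Submodule.span_mono (Set.image_mono ?_) (hspan j hj)
          exact fun i hi => ⟨Finset.mem_insert_of_mem hi.1, hi.2⟩

lemma exists_abs_det_le_mul_prod_norm {ι E : Type*} [NormedAddCommGroup E] [NormedSpace ℝ E]
    [FiniteDimensional ℝ E] {v : ι → E} {I : Finset ι} (hI : LinearIndepOn ℝ v (I : Set ι)) :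
    ∃ C > 0, ∀ T : E →ₗ[ℝ] E, (∀ x, ‖T x‖ ≤ ‖x‖) →
      |LinearMap.det T| ≤ C * ∏ i ∈ I, ‖T (v i)‖ := by
  classical
  let b := Module.Basis.sumExtend hI
  have := Module.Finite.finite_basis b
  have : Finite (Module.Basis.sumExtendIndex hI) := Finite.sum_right (I : Set ι)
  have := Fintype.ofFinite (Module.Basis.sumExtendIndex hI)
  have hb (i : (I : Set ι)) : b (Sum.inl i) = v i := by
    simp only [b, Module.Basis.sumExtend, Module.Basis.reindex_apply,
      Module.Basis.extend_apply_self]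
    rfl
  have hcont : Continuous fun m => b.det m := by
    simp only [Module.Basis.det_apply]
    exact Continuous.matrix_det (continuous_matrix fun i j =>
      (b.coord i).continuous_of_finiteDimensional.comp (continuous_apply j))
  obtain ⟨C, hC, hbound⟩ := b.det.toMultilinearMap.exists_bound_of_continuous hcont
  refine ⟨C * ∏ j, ‖b (Sum.inr j)‖,
    mul_pos hC (Finset.prod_pos fun j _ => norm_pos_iff.mpr (b.ne_zero _)), fun T hT => ?_⟩
  calc |LinearMap.det T|
    _ = ‖b.det (T ∘ b)‖ := by rw [b.det_comp, b.det_self, mul_one, Real.norm_eq_abs]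
    _ ≤ C * ∏ k, ‖T (b k)‖ := hbound _
    _ = C * ((∏ i ∈ I, ‖T (v i)‖) * ∏ j, ‖T (b (Sum.inr j))‖) := by
      rw [← Finset.prod_coe_sort I, Fintype.prod_sum_type]
      simp only [hb]
      rfl
    _ ≤ C * ((∏ i ∈ I, ‖T (v i)‖) * ∏ j, ‖b (Sum.inr j)‖) := by
      gcongr with j
      exact hT _
    _ = C * (∏ j, ‖b (Sum.inr j)‖) * ∏ i ∈ I, ‖T (v i)‖ := by ring

section Potential

variable {ι E : Type*} [NormedAddCommGroup E] [NormedSpace ℝ E]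

/-- The potential of a linear map `T`; its approximate minimizers among contractions put the
directions of the `v i` into radially isotropic position. -/
noncomputable def radialPotential [Fintype ι] (v : ι → E) (c : ℝ) (T : E →ₗ[ℝ] E) : ℝ :=
  ∑ i, Real.log ‖T (v i)‖ - c * Real.log |LinearMap.det T|

variable {v : ι → E}

lemma exists_log_abs_det_le [FiniteDimensional ℝ E] (hv : ∀ i, v i ≠ 0) {I : Finset ι}
    (hI : LinearIndepOn ℝ v (I : Set ι)) :
    ∃ C, ∀ T : E →ₗ[ℝ] E, LinearMap.det T ≠ 0 → (∀ x, ‖T x‖ ≤ ‖x‖) →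
      Real.log |LinearMap.det T| ≤ C + ∑ i ∈ I, Real.log ‖T (v i)‖ := by
  obtain ⟨C, hC, hbound⟩ := exists_abs_det_le_mul_prod_norm hI
  refine ⟨Real.log C, fun T hT hle => ?_⟩
  have hTv (i : ι) : ‖T (v i)‖ ≠ 0 := norm_ne_zero_iff.mpr
    ((map_ne_zero_iff T (LinearMap.equivOfDetNeZero T hT).injective).mpr (hv i))
  rw [← Real.log_prod fun i _ => hTv i,
    ← Real.log_mul hC.ne' (Finset.prod_ne_zero_iff.mpr fun i _ => hTv i)]
  exact Real.log_le_log (abs_pos.mpr hT) (hbound T hle)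

variable [Fintype ι]

lemma sum_le_mul_sum_of_greedy {c : ℝ} (hc : 0 ≤ c)
    (hcount : ∀ U : Submodule ℝ E, ({i | v i ∈ U}.ncard : ℝ) ≤ c * Module.finrank ℝ U)
    {g : ι → ℝ} (hg : ∀ i, 0 ≤ g i) {I : Finset ι}
    (hspan : ∀ j, v j ∈ Submodule.span ℝ (v '' {i | i ∈ I ∧ g j ≤ g i})) :
    ∑ i, g i ≤ c * ∑ i ∈ I, g i := by
  classical
  refine sum_le_mul_sum_of_card_superlevel_le hc hg fun t _ => ?_
  let U := Submodule.span ℝ (({i ∈ I | t ≤ g i}.image v : Finset E) : Set E)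
  have hmem : (({i | t ≤ g i} : Finset ι) : Set ι) ⊆ {i | v i ∈ U} := fun j hj => by
    refine Submodule.span_mono ?_ (hspan j)
    rintro _ ⟨i, ⟨hi, hji⟩, rfl⟩
    exact Finset.mem_image_of_mem v (Finset.mem_filter.mpr
      ⟨hi, (Finset.mem_filter.mp hj).2.trans hji⟩)
  calc (#{i | t ≤ g i} : ℝ) ≤ {i | v i ∈ U}.ncard := by
        rw [← Set.ncard_coe_finset]
        exact_mod_cast Set.ncard_le_ncard hmem
    _ ≤ c * Module.finrank ℝ U := hcount U
    _ ≤ c * #{i ∈ I | t ≤ g i} := by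
      gcongr
      exact (finrank_span_finset_le_card _).trans Finset.card_image_le

lemma exists_forall_le_radialPotential [FiniteDimensional ℝ E] (hv : ∀ i, v i ≠ 0) {c : ℝ}
    (hc : 0 ≤ c)
    (hcount : ∀ U : Submodule ℝ E, ({i | v i ∈ U}.ncard : ℝ) ≤ c * Module.finrank ℝ U) :
    ∃ L, ∀ T : E →ₗ[ℝ] E, LinearMap.det T ≠ 0 → (∀ x, ‖T x‖ ≤ ‖x‖) →
      L ≤ radialPotential v c T := by
  choose! C hC using fun (I : Finset ι) (hI : LinearIndepOn ℝ v (I : Set ι)) =>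
    exists_log_abs_det_le hv hI
  obtain ⟨L, hL⟩ := (Set.finite_range fun I : Finset ι =>
    ∑ i, Real.log ‖v i‖ - c * (C I + ∑ i ∈ I, Real.log ‖v i‖)).bddBelow
  refine ⟨L, fun T hT hle => ?_⟩
  let g (i : ι) : ℝ := Real.log ‖v i‖ - Real.log ‖T (v i)‖
  have hg (i : ι) : 0 ≤ g i := sub_nonneg.mpr (Real.log_le_log (norm_pos_iff.mpr
    ((map_ne_zero_iff T (LinearMap.equivOfDetNeZero T hT).injective).mpr (hv i))) (hle _))
  obtain ⟨I, -, hI, hspan⟩ := exists_greedy_linearIndepOn (K := ℝ) v g Finset.univ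
  have hgreedy := sum_le_mul_sum_of_greedy hc hcount hg fun j => hspan j (Finset.mem_univ j)
  have hdet := mul_le_mul_of_nonneg_left (hC I hI T hT hle) hc
  simp only [g, Finset.sum_sub_distrib] at hgreedy
  have hLI := hL (Set.mem_range_self I)
  unfold radialPotential
  linarith

end Potential

open InnerProductGeometry

variable {ι E : Type*} [NormedAddCommGroup E] [InnerProductSpace ℝ E]

lemma exists_det_eq_sqrt_and_norm_sq_eq [FiniteDimensional ℝ E] {w : E} (hw : ‖w‖ = 1)
    {κ : ℝ} (hκ : κ ≤ 1) :
    ∃ A : E →ₗ[ℝ] E, LinearMap.det A = √(1 - κ) ∧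
      ∀ x, ‖A x‖ ^ 2 = ‖x‖ ^ 2 - κ * inner ℝ x w ^ 2 := by
  refine ⟨LinearMap.transvection (innerₗ E w) ((√(1 - κ) - 1) • w), ?_, fun x => ?_⟩
  · simp [LinearMap.transvection.det, hw]
  · have hsq : √(1 - κ) ^ 2 = 1 - κ := Real.sq_sqrt (sub_nonneg.mpr hκ)
    rw [LinearMap.transvection.apply, innerₗ_apply_apply, smul_smul, norm_add_sq_real,
      inner_smul_right, norm_smul, hw, Real.norm_eq_abs, mul_one, sq_abs, real_inner_comm x w]
    linear_combination inner ℝ x w ^ 2 * hsq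

lemma log_norm_le_of_norm_sq_eq {w y z : E} (hw : ‖w‖ = 1) (hy : y ≠ 0) {κ : ℝ} (hκ : 0 ≤ κ)
    (hκ1 : κ < 1) (hz : ‖z‖ ^ 2 = ‖y‖ ^ 2 - κ * inner ℝ y w ^ 2) :
    Real.log ‖z‖ ≤ Real.log ‖y‖ - κ / 2 * Real.cos (angle y w) ^ 2 := by
  have hy0 : 0 < ‖y‖ ^ 2 := by positivity
  set q := Real.cos (angle y w) ^ 2
  have hfactor : 0 < 1 - κ * q := by
    nlinarith [show 0 ≤ q by positivity, show q ≤ 1 from Real.cos_sq_le_one _]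
  have hzq : ‖z‖ ^ 2 = ‖y‖ ^ 2 * (1 - κ * q) := by
    rw [hz, ← cos_angle_mul_norm_mul_norm, hw]
    ring
  have hlog : 2 * Real.log ‖z‖ = 2 * Real.log ‖y‖ + Real.log (1 - κ * q) := by
    simpa [Real.log_mul hy0.ne' hfactor.ne'] using congrArg Real.log hzq
  linarith [Real.log_le_sub_one_of_pos hfactor]

variable [Fintype ι] {v : ι → E}

lemma sum_cos_angle_sq_le_of_forall_norm_eq_one {c : ℝ} (hc : 0 ≤ c)
    (hle : ∀ w, ‖w‖ = 1 → ∑ i, Real.cos (angle (v i) w) ^ 2 ≤ c) (w : E) :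
    ∑ i, Real.cos (angle (v i) w) ^ 2 ≤ c := by
  rcases eq_or_ne w 0 with rfl | hw
  · simpa using hc
  · simpa only [angle_smul_right_of_pos _ _ (inv_pos.mpr (norm_pos_iff.mpr hw))] using
      hle (‖w‖⁻¹ • w) (norm_smul_inv_norm hw)

variable [FiniteDimensional ℝ E]

lemma radialPotential_comp_le (hv : ∀ i, v i ≠ 0) {T A : E →ₗ[ℝ] E} (hT : LinearMap.det T ≠ 0)
    {w : E} (hw : ‖w‖ = 1) {κ : ℝ} (hκ : 0 ≤ κ) (hκ1 : κ < 1)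
    (hA : LinearMap.det A = √(1 - κ)) (hAnorm : ∀ x, ‖A x‖ ^ 2 = ‖x‖ ^ 2 - κ * inner ℝ x w ^ 2)
    {c : ℝ} (hc : 0 ≤ c) :
    radialPotential v c (A ∘ₗ T) ≤ radialPotential v c T + κ / 2 *
      (c / (1 - κ) - ∑ i, Real.cos (angle (T (v i)) w) ^ 2) := by
  have hTv (i : ι) : T (v i) ≠ 0 :=
    (map_ne_zero_iff T (LinearMap.equivOfDetNeZero T hT).injective).mpr (hv i)
  have hsum : ∑ i, Real.log ‖A (T (v i))‖ ≤ ∑ i, Real.log ‖T (v i)‖ -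
      κ / 2 * ∑ i, Real.cos (angle (T (v i)) w) ^ 2 := by
    rw [Finset.mul_sum, ← Finset.sum_sub_distrib]
    exact Finset.sum_le_sum fun i _ => log_norm_le_of_norm_sq_eq hw (hTv i) hκ hκ1 (hAnorm _)
  have hpos : 0 < 1 - κ := sub_pos.mpr hκ1
  have hdet : Real.log |LinearMap.det (A ∘ₗ T)| =
      Real.log (1 - κ) / 2 + Real.log |LinearMap.det T| := by
    rw [LinearMap.det_comp, hA, abs_mul, abs_of_nonneg (Real.sqrt_nonneg _),
      Real.log_mul (Real.sqrt_ne_zero'.mpr hpos) (abs_ne_zero.mpr hT), Real.log_sqrt hpos.le]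
  have hlog : -(κ / (1 - κ)) ≤ Real.log (1 - κ) := by
    convert Real.one_sub_inv_le_log_of_pos hpos using 1
    field_simp
    ring
  have hclog := mul_le_mul_of_nonneg_left hlog hc
  have hcomm : κ / 2 * (c / (1 - κ)) = c * (κ / (1 - κ)) / 2 := by ring
  simp only [radialPotential, LinearMap.comp_apply, hdet]
  linarith

theorem exists_radially_isotropic (hv : ∀ i, v i ≠ 0) {c c' : ℝ} (hc : 0 < c) (hcc' : c < c')
    (hcount : ∀ U : Submodule ℝ E, ({i | v i ∈ U}.ncard : ℝ) ≤ c * Module.finrank ℝ U) :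
    ∃ T : E →ₗ[ℝ] E, Function.Injective T ∧
      ∀ w, ∑ i, Real.cos (angle (T (v i)) w) ^ 2 ≤ c' := by
  obtain ⟨L, hL⟩ := exists_forall_le_radialPotential hv hc.le hcount
  let contractions : Set (E →ₗ[ℝ] E) := {T | LinearMap.det T ≠ 0 ∧ ∀ x, ‖T x‖ ≤ ‖x‖}
  have hne : (radialPotential v c '' contractions).Nonempty :=
    ⟨_, LinearMap.id, ⟨by simp, fun x => le_rfl⟩, rfl⟩
  have hbdd : BddBelow (radialPotential v c '' contractions) :=
    ⟨L, Set.forall_mem_image.mpr fun T hT => hL T hT.1 hT.2⟩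
  let κ := (c' - c) / (c + c')
  have hsub : 0 < c' - c := sub_pos.mpr hcc'
  have hsum : 0 < c + c' := by linarith
  have hκ : 0 < κ := div_pos hsub hsum
  have hκ1 : 1 - κ = 2 * c / (c + c') := by simp only [κ]; field_simp; ring
  have hκlt : κ < 1 := sub_pos.mp (hκ1 ▸ by positivity)
  obtain ⟨_, ⟨T, ⟨hT, hle⟩, rfl⟩, hmin⟩ := exists_lt_of_csInf_lt hne
    (lt_add_of_pos_right _ (show 0 < κ / 2 * ((c' - c) / 2) by positivity))
  refine ⟨T, (LinearMap.equivOfDetNeZero T hT).injective,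
    sum_cos_angle_sq_le_of_forall_norm_eq_one (by linarith) fun w hw => ?_⟩
  obtain ⟨A, hA, hAnorm⟩ := exists_det_eq_sqrt_and_norm_sq_eq hw hκlt.le
  have hmem : A ∘ₗ T ∈ contractions := by
    refine ⟨?_, fun x => le_trans (le_of_sq_le_sq ?_ (norm_nonneg _)) (hle x)⟩
    · rw [LinearMap.det_comp, hA]
      exact mul_ne_zero (Real.sqrt_ne_zero'.mpr (sub_pos.mpr hκlt)) hT
    · rw [LinearMap.comp_apply, hAnorm]
      exact sub_le_self _ (by positivity)
  have hinf := csInf_le hbdd ⟨_, hmem, rfl⟩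
  have hcomp := radialPotential_comp_le hv hT hw hκ.le hκlt hA hAnorm hc.le
  have hlevel : c / (1 - κ) = (c + c') / 2 := by rw [hκ1]; field_simp
  rw [hlevel] at hcomp
  have hscaled : 0 ≤ κ / 2 * (c' - ∑ i, Real.cos (angle (T (v i)) w) ^ 2) := by linarith
  exact sub_nonneg.mp (nonneg_of_mul_nonneg_right hscaled (half_pos hκ))

end RadialIsotropy

section Directions

open InnerProductGeometry
open scoped Finset

lemma span_image_prodMk_one_eq_top {K V : Type*} [DivisionRing K] [AddCommGroup V] [Module K V]
    {s : Set V} (hs : affineSpan K s = ⊤) :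
    Submodule.span K ((fun p => (p, (1 : K))) '' s) = ⊤ := by
  set S := Submodule.span K ((fun p => (p, (1 : K))) '' s)
  have hmem (p) (hp : p ∈ s) : (p, (1 : K)) ∈ S :=
    Submodule.subset_span (Set.mem_image_of_mem _ hp)
  have hvec : vectorSpan K s ≤ S.comap (LinearMap.inl K V K) := by
    rw [vectorSpan_def, Submodule.span_le]
    rintro _ ⟨p, hp, q, hq, rfl⟩
    simpa using S.sub_mem (hmem p hp) (hmem q hq)
  rw [AffineSubspace.vectorSpan_eq_top_of_affineSpan_eq_top K V V hs] at hvec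
  obtain ⟨q, hq⟩ := AffineSubspace.nonempty_of_affineSpan_eq_top K V V hs
  refine eq_top_iff.mpr fun x _ => ?_
  have hx := S.add_mem (hvec (x := x.1 - x.2 • q) trivial) (S.smul_mem x.2 (hmem q hq))
  simpa using hx

variable {V : Type*} [AddCommGroup V] [Module ℝ V]

open scoped Classical in
/-- The directions determined by a finite set of points, as the lines through the origin spanned by
the differences of distinct points. -/
noncomputable def directions (Q : Finset V) : Finset (Submodule ℝ V) :=
  Q.offDiag.image fun x => Submodule.span ℝ {x.1 - x.2}

lemma span_sub_mem_directions {Q : Finset V} {p q : V} (hp : p ∈ Q) (hq : q ∈ Q) (hpq : p ≠ q) :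
    Submodule.span ℝ {p - q} ∈ directions Q :=
  Finset.mem_image.mpr ⟨(p, q), Finset.mem_offDiag.mpr ⟨hp, hq, hpq⟩, rfl⟩

lemma eq_and_eq_of_sub_eq_smul_sub {W : Submodule ℝ (V × ℝ)} {B : Set V}
    (hB : LinearIndepOn ℝ (fun p => W.mkQ (p, 1)) B) {a a' b b' : V} (ha : (a, 1) ∈ W)
    (ha' : (a', 1) ∈ W) (hb : b ∈ B) (hb' : b' ∈ B) {c : ℝ} (hc : b - a = c • (b' - a')) :
    a = a' ∧ b = b' := by
  have hsmul : (1 : ℝ) • W.mkQ (b, 1) = c • W.mkQ (b', 1) := by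
    have hlift : (b, (1 : ℝ)) - (a, 1) = c • ((b', 1) - (a', 1)) := by simp [hc]
    have hmk := congrArg W.mkQ hlift
    rwa [map_smul, map_sub, map_sub, W.mkQ_apply (a, 1), W.mkQ_apply (a', 1),
      (Submodule.Quotient.mk_eq_zero W).mpr ha, (Submodule.Quotient.mk_eq_zero W).mpr ha',
      sub_zero, sub_zero, ← one_smul ℝ (W.mkQ (b, 1))] at hmk
  obtain rfl : b = b' := congrArg Subtype.val (hB.linearIndependent.eq_of_smul_apply_eq_smul_apply
    1 c ⟨b, hb⟩ ⟨b', hb'⟩ one_ne_zero hsmul)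
  obtain rfl : 1 = c := smul_left_injective ℝ (hB.ne_zero hb) hsmul
  rw [one_smul, sub_right_inj] at hc
  exact ⟨hc, rfl⟩

lemma injOn_span_sub_of_linearIndepOn_mkQ {W : Submodule ℝ (V × ℝ)} {B : Set V}
    (hB : LinearIndepOn ℝ (fun p => W.mkQ (p, 1)) B) :
    ({p | (p, (1 : ℝ)) ∈ W} ×ˢ B).InjOn fun x : V × V => Submodule.span ℝ {x.2 - x.1} := by
  rintro ⟨a, b⟩ ⟨ha, hb⟩ ⟨a', b'⟩ ⟨ha', hb'⟩ heq
  obtain ⟨c, hc⟩ := Submodule.mem_span_singleton.mp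
    (heq.le (Submodule.mem_span_singleton_self (b - a)))
  exact Prod.ext_iff.mpr (eq_and_eq_of_sub_eq_smul_sub hB ha ha' hb hb' hc.symm)

lemma ne_of_linearIndepOn_mkQ {W : Submodule ℝ (V × ℝ)} {B : Set V}
    (hB : LinearIndepOn ℝ (fun p => W.mkQ (p, 1)) B) {a b : V} (ha : (a, 1) ∈ W) (hb : b ∈ B) :
    b ≠ a := by
  rintro rfl
  exact hB.ne_zero hb ((Submodule.Quotient.mk_eq_zero W).mpr ha)

lemma exists_linearIndepOn_card_eq_finrank {K ι E : Type*} [DivisionRing K] [AddCommGroup E]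
    [Module K E] {v : ι → E} {s : Finset ι} (hs : Submodule.span K (v '' (s : Set ι)) = ⊤) :
    ∃ B ⊆ s, LinearIndepOn K v (B : Set ι) ∧ #B = Module.finrank K E := by
  obtain ⟨B, hBs, -, hspan, hB⟩ :=
    exists_linearIndepOn_extension (linearIndepOn_empty K v) (Set.empty_subset (s : Set ι))
  lift B to Finset ι using s.finite_toSet.subset hBs
  have htop : Submodule.span K (v '' (B : Set ι)) = ⊤ :=
    eq_top_iff.mpr (hs ▸ Submodule.span_le.mpr hspan)
  refine ⟨B, hBs, hB, ?_⟩
  rw [← finrank_top, ← htop, Set.image_eq_range, finrank_span_eq_card hB]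
  exact (Fintype.card_coe B).symm

lemma exists_linearIndepOn_mkQ_card_eq {Q : Finset V} (hQ : affineSpan ℝ (Q : Set V) = ⊤)
    (W : Submodule ℝ (V × ℝ)) :
    ∃ B ⊆ Q, LinearIndepOn ℝ (fun p => W.mkQ (p, 1)) (B : Set V) ∧
      #B = Module.finrank ℝ ((V × ℝ) ⧸ W) := by
  refine exists_linearIndepOn_card_eq_finrank ?_
  rw [← W.range_mkQ, ← Submodule.map_top, ← span_image_prodMk_one_eq_top hQ, Submodule.map_span,
    Set.image_image]

open scoped Classical in
lemma card_mul_finrank_quotient_le_card_directions {Q : Finset V}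
    (hQ : affineSpan ℝ (Q : Set V) = ⊤) (W : Submodule ℝ (V × ℝ)) :
    #{p ∈ Q | (p, (1 : ℝ)) ∈ W} * Module.finrank ℝ ((V × ℝ) ⧸ W) ≤ #(directions Q) := by
  obtain ⟨B, hBQ, hB, hcard⟩ := exists_linearIndepOn_mkQ_card_eq hQ W
  rw [← hcard, ← Finset.card_product]
  refine Finset.card_le_card_of_injOn (fun x => Submodule.span ℝ {x.2 - x.1}) ?_
    ((injOn_span_sub_of_linearIndepOn_mkQ hB).mono fun x hx => ?_)
  · rintro ⟨a, b⟩ hab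
    obtain ⟨ha, hb⟩ := Finset.mem_product.mp hab
    rw [Finset.mem_filter] at ha
    exact span_sub_mem_directions (hBQ hb) ha.1 (ne_of_linearIndepOn_mkQ hB ha.2 hb)
  · obtain ⟨ha, hb⟩ := Finset.mem_product.mp hx
    exact ⟨(Finset.mem_filter.mp ha).2, hb⟩

lemma span_singleton_eq_of_mem {K V : Type*} [DivisionRing K] [AddCommGroup V] [Module K V]
    {x y : V} (hx : x ≠ 0) (h : x ∈ Submodule.span K {y}) :
    Submodule.span K {x} = Submodule.span K {y} := by
  obtain ⟨c, rfl⟩ := Submodule.mem_span_singleton.mp h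
  exact Submodule.span_singleton_smul_eq (IsUnit.mk0 c (left_ne_zero_of_smul hx)) y

lemma card_div_two_le_sum_cos_sub_sq_add {ι : Type*} (s : Finset ι) (θ : ι → ℝ) :
    (#s : ℝ) / 2 ≤ ∑ p ∈ s, ∑ q ∈ s, (Real.cos (θ p - θ q) ^ 2 - 1 / 2) +
      2 * ∑ p ∈ s, Real.cos (θ p) ^ 2 := by
  rcases s.eq_empty_or_nonempty with rfl | hs
  · simp
  have hcard : ∑ p ∈ s, Real.cos (θ p) ^ 2 + ∑ p ∈ s, Real.sin (θ p) ^ 2 = #s := by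
    simp [← Finset.sum_add_distrib]
  have hone : (1 : ℝ) ≤ #s := by exact_mod_cast hs.card_pos
  have hexpand : ∑ p ∈ s, ∑ q ∈ s, (Real.cos (θ p - θ q) ^ 2 - 1 / 2) =
      (∑ p ∈ s, Real.cos (θ p) ^ 2) ^ 2 + (∑ p ∈ s, Real.sin (θ p) ^ 2) ^ 2 +
        2 * (∑ p ∈ s, Real.cos (θ p) * Real.sin (θ p)) ^ 2 - (#s : ℝ) ^ 2 / 2 := by
    have hterm (p q) : Real.cos (θ p - θ q) ^ 2 - 1 / 2 =
        Real.cos (θ p) ^ 2 * Real.cos (θ q) ^ 2 + Real.sin (θ p) ^ 2 * Real.sin (θ q) ^ 2 +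
          2 * ((Real.cos (θ p) * Real.sin (θ p)) * (Real.cos (θ q) * Real.sin (θ q))) - 1 / 2 := by
      rw [Real.cos_sub]
      ring
    simp only [hterm, Finset.sum_sub_distrib, Finset.sum_add_distrib, ← Finset.mul_sum,
      ← Finset.sum_mul, Finset.sum_const, nsmul_eq_mul]
    ring
  rw [hexpand, ← hcard]
  rw [← hcard] at hone
  nlinarith [sq_nonneg (∑ p ∈ s, Real.cos (θ p) ^ 2 - ∑ p ∈ s, Real.sin (θ p) ^ 2 + 1),
    sq_nonneg (∑ p ∈ s, Real.cos (θ p) * Real.sin (θ p))]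

variable {F : Type*} [NormedAddCommGroup F] [InnerProductSpace ℝ F]

lemma sum_sum_cos_angle_sq_sub_half {ι : Type*} {s : Finset ι} {y : ι → F}
    (hy : ∀ p ∈ s, y p ≠ 0) :
    ∑ p ∈ s, ∑ q ∈ s, (Real.cos (angle (y p) (y q)) ^ 2 - 1 / 2) =
      (#s : ℝ) / 2 + ∑ x ∈ s.offDiag, (Real.cos (angle (y x.1) (y x.2)) ^ 2 - 1 / 2) := by
  classical
  have hdiag : ∀ p ∈ s, Real.cos (angle (y p) (y p)) ^ 2 - 1 / 2 = (1 / 2 : ℝ) := fun p hp => by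
    rw [angle_self (hy p hp), Real.cos_zero]
    norm_num
  rw [← Finset.sum_product', ← Finset.diag_union_offDiag,
    Finset.sum_union (Finset.disjoint_diag_offDiag s), Finset.sum_diag,
    Finset.sum_congr rfl hdiag, Finset.sum_const, nsmul_eq_mul, mul_one_div]

lemma cos_angle_eq_cos_angle_sub_angle {w y z : F} (hy : y ≠ 0) (hz : z ≠ 0)
    (hyz : y - z ∈ Submodule.span ℝ {w}) :
    Real.cos (angle y z) = Real.cos (angle y w - angle z w) := by
  obtain ⟨c, hc⟩ := Submodule.mem_span_singleton.mp hyz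
  obtain rfl : y = z + c • w := by rw [hc, add_sub_cancel]
  rcases eq_or_ne w 0 with rfl | hw
  · simp [angle_self hz]
  have hgram : inner ℝ (z + c • w) (z + c • w) * inner ℝ w w -
      inner ℝ (z + c • w) w * inner ℝ (z + c • w) w =
      inner ℝ z z * inner ℝ w w - inner ℝ z w * inner ℝ z w := by
    simp only [inner_add_left, inner_add_right, inner_smul_left, inner_smul_right,
      real_inner_comm z w, RCLike.conj_to_real]
    ring
  have hscale : 0 < ‖z + c • w‖ * ‖z‖ * ‖w‖ ^ 2 := by positivity
  refine mul_right_cancel₀ hscale.ne' ?_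
  calc Real.cos (angle (z + c • w) z) * (‖z + c • w‖ * ‖z‖ * ‖w‖ ^ 2)
    _ = inner ℝ (z + c • w) z * inner ℝ w w := by
      rw [← cos_angle_mul_norm_mul_norm, real_inner_self_eq_norm_sq]
      ring
    _ = inner ℝ (z + c • w) w * inner ℝ z w +
        (inner ℝ z z * inner ℝ w w - inner ℝ z w * inner ℝ z w) := by
      simp only [inner_add_left, inner_smul_left, real_inner_comm z w, RCLike.conj_to_real]
      ring
    _ = (Real.cos (angle (z + c • w) w) * (‖z + c • w‖ * ‖w‖)) *
          (Real.cos (angle z w) * (‖z‖ * ‖w‖)) +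
        (Real.sin (angle (z + c • w) w) * (‖z + c • w‖ * ‖w‖)) *
          (Real.sin (angle z w) * (‖z‖ * ‖w‖)) := by
      simp only [cos_angle_mul_norm_mul_norm, sin_angle_mul_norm_mul_norm]
      rw [hgram, Real.mul_self_sqrt (sub_nonneg.mpr (real_inner_mul_inner_self_le z w))]
    _ = _ := by
      rw [Real.cos_sub]
      ring

lemma sum_offDiag_cos_angle_sq_sub_half_add_nonneg {ι : Type*} {s : Finset ι} {y : ι → F}
    (hy : ∀ p ∈ s, y p ≠ 0) {w : F}
    (hline : ∀ p ∈ s, ∀ q ∈ s, y p - y q ∈ Submodule.span ℝ {w}) :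
    0 ≤ ∑ x ∈ s.offDiag, (Real.cos (angle (y x.1) (y x.2)) ^ 2 - 1 / 2) +
      2 * ∑ p ∈ s, Real.cos (angle (y p) w) ^ 2 := by
  have hplane := card_div_two_le_sum_cos_sub_sq_add s fun p => angle (y p) w
  have hcos : ∀ p ∈ s, ∀ q ∈ s, Real.cos (angle (y p) w - angle (y q) w) =
      Real.cos (angle (y p) (y q)) := fun p hp q hq =>
    (cos_angle_eq_cos_angle_sub_angle (hy p hp) (hy q hq) (hline p hp q hq)).symm
  rw [Finset.sum_congr rfl fun p hp => Finset.sum_congr rfl fun q hq => by rw [hcos p hp q hq],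
    sum_sum_cos_angle_sq_sub_half hy] at hplane
  linarith

lemma sum_offDiag_filter_eq_sum_fiberwise {ι κ M : Type*} [DecidableEq κ]
    [AddCommMonoid M] (s : Finset ι) (f : ι → κ) (g : ι × ι → M) :
    ∑ x ∈ s.offDiag with f x.1 = f x.2, g x =
      ∑ k ∈ s.image f, ∑ x ∈ {p ∈ s | f p = k}.offDiag, g x := by
  classical
  rw [← Finset.sum_fiberwise_of_maps_to (g := fun x => f x.1) (t := s.image f) fun x hx =>
    Finset.mem_image_of_mem f (Finset.mem_offDiag.mp (Finset.mem_filter.mp hx).1).1]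
  refine Finset.sum_congr rfl fun k _ => Finset.sum_congr ?_ fun _ _ => rfl
  ext x
  simp only [Finset.mem_filter, Finset.mem_offDiag]
  grind

variable {c : ℝ} {Q : Finset V} {y : V →ᵃ[ℝ] F}

open scoped Classical in
lemma neg_two_mul_le_sum_offDiag_filter_direction (hy : ∀ p ∈ Q, y p ≠ 0)
    (hiso : ∀ w, ∑ p ∈ Q, Real.cos (angle (y p) w) ^ 2 ≤ c) (v : V) :
    -(2 * c) ≤ ∑ x ∈ Q.offDiag with Submodule.span ℝ {x.1 - x.2} = Submodule.span ℝ {v},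
      (Real.cos (angle (y x.1) (y x.2)) ^ 2 - 1 / 2) := by
  obtain ⟨f, hf⟩ : ∃ f : V → V ⧸ Submodule.span ℝ {v},
      ∀ {p q}, f p = f q ↔ p - q ∈ Submodule.span ℝ {v} := ⟨_, Submodule.Quotient.eq _⟩
  have hparallel : ∀ x ∈ Q.offDiag,
      Submodule.span ℝ {x.1 - x.2} = Submodule.span ℝ {v} ↔ f x.1 = f x.2 := fun x hx => by
    rw [hf]
    refine ⟨fun h => h ▸ Submodule.mem_span_singleton_self _, fun h => ?_⟩
    exact span_singleton_eq_of_mem (sub_ne_zero.mpr (Finset.mem_offDiag.mp hx).2.2) h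
  have hclass (k) : 0 ≤ ∑ x ∈ {p ∈ Q | f p = k}.offDiag,
        (Real.cos (angle (y x.1) (y x.2)) ^ 2 - 1 / 2) +
      2 * ∑ p ∈ Q with f p = k, Real.cos (angle (y p) (y.linear v)) ^ 2 := by
    refine sum_offDiag_cos_angle_sq_sub_half_add_nonneg (y := y)
      (fun p hp => hy p (Finset.mem_filter.mp hp).1) fun p hp q hq => ?_
    rw [← vsub_eq_sub (y p), ← y.linearMap_vsub, ← Set.image_singleton, ← Submodule.map_span]
    exact Submodule.mem_map_of_mem
      (hf.mp ((Finset.mem_filter.mp hp).2.trans (Finset.mem_filter.mp hq).2.symm))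
  have hsum := Finset.sum_nonneg fun k (_ : k ∈ Q.image f) => hclass k
  rw [Finset.sum_add_distrib, ← Finset.mul_sum, ← sum_offDiag_filter_eq_sum_fiberwise,
    Finset.sum_fiberwise_of_maps_to fun p hp => Finset.mem_image_of_mem f hp] at hsum
  rw [Finset.filter_congr hparallel]
  linarith [hiso (y.linear v)]

open scoped Classical in
theorem card_mul_le_card_directions_of_isotropic (hy : ∀ p ∈ Q, y p ≠ 0)
    (hiso : ∀ w, ∑ p ∈ Q, Real.cos (angle (y p) w) ^ 2 ≤ c) :
    #Q * ((#Q + 1) / 2 - c) ≤ 2 * c * #(directions Q) := by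
  have hupper : ∑ p ∈ Q, ∑ q ∈ Q, (Real.cos (angle (y p) (y q)) ^ 2 - 1 / 2) ≤
      #Q * (c - #Q / 2) := by
    rw [← nsmul_eq_mul]
    refine Finset.sum_le_card_nsmul _ _ _ fun p _ => ?_
    rw [Finset.sum_sub_distrib, Finset.sum_const, nsmul_eq_mul, mul_one_div]
    simpa only [angle_comm] using sub_le_sub_right (hiso (y p)) _
  have hlower : -(2 * c * #(directions Q)) ≤
      ∑ x ∈ Q.offDiag, (Real.cos (angle (y x.1) (y x.2)) ^ 2 - 1 / 2) := by
    have hdir : ∀ x ∈ Q.offDiag, Submodule.span ℝ {x.1 - x.2} ∈ directions Q := fun x hx =>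
      Finset.mem_image_of_mem (fun x : V × V => Submodule.span ℝ {x.1 - x.2}) hx
    rw [← Finset.sum_fiberwise_of_maps_to hdir]
    refine le_trans ?_ (Finset.card_nsmul_le_sum _ _ (-(2 * c)) fun θ hθ => ?_)
    · rw [nsmul_eq_mul]
      linarith
    · obtain ⟨x, -, rfl⟩ := Finset.mem_image.mp hθ
      exact neg_two_mul_le_sum_offDiag_filter_direction hy hiso _
  rw [sum_sum_cos_angle_sq_sub_half hy] at hupper
  linarith

lemma finrank_comap_le {K E E' : Type*} [DivisionRing K] [AddCommGroup E] [Module K E]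
    [FiniteDimensional K E] [AddCommGroup E'] [Module K E'] [FiniteDimensional K E']
    (φ : E →ₗ[K] E') (U : Submodule K E') :
    Module.finrank K (U.comap φ) ≤ Module.finrank K U + Module.finrank K (LinearMap.ker φ) := by
  rw [← (φ.domRestrict (U.comap φ)).finrank_range_add_finrank_ker, LinearMap.ker_domRestrict,
    (Submodule.comapSubtypeEquivOfLe φ.ker_le_comap).finrank_eq]
  refine Nat.add_le_add_right (Submodule.finrank_mono ?_) _
  rintro _ ⟨x, rfl⟩
  exact x.2

section RadialQuotient

variable {E ι : Type*} [AddCommGroup E] [Module ℝ E] [FiniteDimensional ℝ E]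

lemma exists_linearMap_euclideanSpace_ker_eq (W : Submodule ℝ E) :
    ∃ (m : ℕ) (φ : E →ₗ[ℝ] EuclideanSpace ℝ (Fin m)), LinearMap.ker φ = W := by
  let e : (E ⧸ W) ≃ₗ[ℝ] EuclideanSpace ℝ (Fin (Module.finrank ℝ (E ⧸ W))) :=
    LinearEquiv.ofFinrankEq _ _ finrank_euclideanSpace_fin.symm
  exact ⟨_, e.toLinearMap ∘ₗ W.mkQ, by rw [LinearEquiv.ker_comp, W.ker_mkQ]⟩

open scoped Classical in
lemma exists_submodule_card_sub_mul_finrank_maximal (s : Finset ι) (v : ι → E) (c : ℝ) :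
    ∃ W : Submodule ℝ E, ∀ U : Submodule ℝ E,
      #{i ∈ s | v i ∈ U} - c * Module.finrank ℝ U ≤
        #{i ∈ s | v i ∈ W} - c * Module.finrank ℝ W := by
  let f (U : Submodule ℝ E) : ℕ × ℕ := (#{i ∈ s | v i ∈ U}, Module.finrank ℝ U)
  have hfin : (Set.range f).Finite := by
    refine ((Set.finite_Iic #s).prod (Set.finite_Iic (Module.finrank ℝ E))).subset ?_
    rintro _ ⟨U, rfl⟩
    exact ⟨Finset.card_filter_le _ _, U.finrank_le⟩
  obtain ⟨_, ⟨W, rfl⟩, hW⟩ :=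
    Set.exists_max_image (Set.range f) (fun x => (x.1 : ℝ) - c * x.2) hfin ⟨_, ⊥, rfl⟩
  exact ⟨W, fun U => hW _ ⟨U, rfl⟩⟩

open scoped Classical in
lemma card_filter_mem_le_mul_finrank_of_ker_maximal {F : Type*} [AddCommGroup F] [Module ℝ F]
    [FiniteDimensional ℝ F] {s : Finset ι} {v : ι → E} {c : ℝ} (hc : 0 ≤ c) {φ : E →ₗ[ℝ] F}
    (hmax : ∀ U : Submodule ℝ E, #{i ∈ s | v i ∈ U} - c * Module.finrank ℝ U ≤
      #{i ∈ s | v i ∈ LinearMap.ker φ} - c * Module.finrank ℝ (LinearMap.ker φ))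
    (U : Submodule ℝ F) :
    #{i ∈ s | v i ∉ LinearMap.ker φ ∧ φ (v i) ∈ U} ≤ c * Module.finrank ℝ U := by
  have hcard : #{i ∈ s | v i ∈ U.comap φ} =
      #{i ∈ s | v i ∈ LinearMap.ker φ} + #{i ∈ s | v i ∉ LinearMap.ker φ ∧ φ (v i) ∈ U} := by
    rw [← Finset.card_filter_add_card_filter_not (s := {i ∈ s | v i ∈ U.comap φ})
      (fun i => v i ∈ LinearMap.ker φ), Finset.filter_filter, Finset.filter_filter]
    congr 2 <;> refine Finset.filter_congr fun i _ => ?_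
    · exact and_iff_right_of_imp fun h => φ.ker_le_comap h
    · exact and_comm
  have hrank : (Module.finrank ℝ (U.comap φ) : ℝ) ≤
      Module.finrank ℝ U + Module.finrank ℝ (LinearMap.ker φ) := mod_cast finrank_comap_le φ U
  have hU := hmax (U.comap φ)
  rw [hcard, Nat.cast_add] at hU
  linarith [mul_le_mul_of_nonneg_left hrank hc]

/- The kernel is a subspace maximizing (number of vectors inside) - c * (dimension), so that
modulo the kernel no subspace contains too many of the vectors. -/
open scoped Classical in
theorem exists_linearMap_radially_isotropic (s : Finset ι) (v : ι → E) {c c' : ℝ} (hc : 0 < c)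
    (hcc' : c < c') :
    ∃ (m : ℕ) (φ : E →ₗ[ℝ] EuclideanSpace ℝ (Fin m)),
      c * Module.finrank ℝ (LinearMap.ker φ) ≤ #{i ∈ s | v i ∈ LinearMap.ker φ} ∧
      ∀ w, ∑ i ∈ s with v i ∉ LinearMap.ker φ, Real.cos (angle (φ (v i)) w) ^ 2 ≤ c' := by
  obtain ⟨W, hmax⟩ := exists_submodule_card_sub_mul_finrank_maximal s v c
  obtain ⟨m, φ, rfl⟩ := exists_linearMap_euclideanSpace_ker_eq W
  let t := s.filter fun i => v i ∉ LinearMap.ker φ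
  obtain ⟨T, hT, hiso⟩ := exists_radially_isotropic (v := fun i : t => φ (v i))
    (fun i => (Finset.mem_filter.mp i.2).2) hc hcc' fun U => by
      refine le_trans (Nat.cast_le.mpr ?_)
        (card_filter_mem_le_mul_finrank_of_ker_maximal hc.le hmax U)
      rw [← Set.ncard_coe_finset, ← Set.ncard_image_of_injective _ Subtype.val_injective]
      refine Set.ncard_le_ncard ?_ (Finset.finite_toSet _)
      rintro _ ⟨i, hi, rfl⟩
      obtain ⟨his, hi0⟩ := Finset.mem_filter.mp i.2
      exact Finset.mem_filter.mpr ⟨his, hi0, hi⟩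
  have hker : LinearMap.ker (T ∘ₗ φ) = LinearMap.ker φ :=
    LinearMap.ker_comp_of_ker_eq_bot φ (LinearMap.ker_eq_bot.mpr hT)
  refine ⟨_, T ∘ₗ φ, ?_, fun w => ?_⟩
  · have hbot := hmax ⊥
    simp only [finrank_bot, Nat.cast_zero, mul_zero, sub_zero] at hbot
    rw [hker]
    linarith [Nat.cast_nonneg (α := ℝ) #{i ∈ s | v i ∈ (⊥ : Submodule ℝ E)}]
  · rw [hker, ← Finset.sum_coe_sort]
    exact hiso w

end RadialQuotient

lemma directions_mono {Q Q' : Finset V} (h : Q ⊆ Q') : directions Q ⊆ directions Q' :=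
  Finset.image_subset_image (Finset.offDiag_mono h)

lemma mul_div_le_of_le_card_of_sparse {d n l k x : ℝ} (hd : 0 ≤ d) (hn : 0 < n)
    (hnx : n / 24 ≤ x) (hxn : x ≤ n) (hk : 11 / 10 * n / (d + 1) * k ≤ x)
    (hl : x * (d + 1 - k) ≤ l) : d * n / 48 ≤ l := by
  have hk' : 11 / 10 * n * k ≤ x * (d + 1) := by
    rwa [div_mul_eq_mul_div, div_le_iff₀ (by positivity)] at hk
  have hx : 0 ≤ x := by linarith
  have hquad : 11 / 480 * n ^ 2 ≤ x * (11 / 10 * n - x) := by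
    nlinarith [mul_nonneg (sub_nonneg.mpr hnx) (sub_nonneg.mpr hxn)]
  refine le_trans ?_ hl
  refine le_of_mul_le_mul_left (a := 11 / 10 * n) ?_ (by positivity)
  calc 11 / 10 * n * (d * n / 48) ≤ (d + 1) * (11 / 480 * n ^ 2) := by nlinarith [sq_nonneg n]
    _ ≤ (d + 1) * (x * (11 / 10 * n - x)) := by gcongr
    _ = x * (11 / 10 * n * (d + 1) - x * (d + 1)) := by ring
    _ ≤ x * (11 / 10 * n * (d + 1) - 11 / 10 * n * k) := by gcongr
    _ = 11 / 10 * n * (x * (d + 1 - k)) := by ring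

lemma mul_div_le_of_card_le_of_isotropic {d n l y : ℝ} (hd : 2 ≤ d) (hn : 0 < n)
    (hny : 23 / 24 * n ≤ y)
    (hl : y * ((y + 1) / 2 - 12 / 10 * n / (d + 1)) ≤ 2 * (12 / 10 * n / (d + 1)) * l) :
    d * n / 48 ≤ l := by
  have : 0 < d + 1 := by linarith
  have hn_le : 2 * n ≤ d * n := by gcongr
  have hy_mul : 23 / 24 * n * (d + 1) ≤ y * (d + 1) := by gcongr
  refine le_of_mul_le_mul_left (a := 24 / 10 * n) ?_ (by positivity)
  calc 24 / 10 * n * (d * n / 48)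
      ≤ 23 / 24 * n * (23 / 48 * n * (d + 1) - 12 / 10 * n) := by nlinarith
    _ ≤ y * ((y + 1) / 2 * (d + 1) - 12 / 10 * n) := by
      refine mul_le_mul hny ?_ ?_ ?_ <;> linarith
    _ = y * ((y + 1) / 2 - 12 / 10 * n / (d + 1)) * (d + 1) := by field_simp
    _ ≤ 2 * (12 / 10 * n / (d + 1)) * l * (d + 1) := by gcongr
    _ = 24 / 10 * n * l := by field_simp; ring

theorem finrank_mul_card_div_le_card_directions (hV : 2 ≤ Module.finrank ℝ V) {Q : Finset V}
    (hQ : affineSpan ℝ (Q : Set V) = ⊤) : Module.finrank ℝ V * #Q / 48 ≤ (#(directions Q) : ℝ) := by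
  classical
  have : FiniteDimensional ℝ V := Module.finite_of_finrank_pos (by lia)
  have hd : (2 : ℝ) ≤ Module.finrank ℝ V := mod_cast hV
  have hn : (0 : ℝ) < #Q := mod_cast Finset.card_pos.mpr
    (Finset.coe_nonempty.mp (AffineSubspace.nonempty_of_affineSpan_eq_top ℝ V V hQ))
  obtain ⟨m, φ, hker, hiso⟩ := exists_linearMap_radially_isotropic Q (fun p => (p, (1 : ℝ)))
    (c := 11 / 10 * #Q / (Module.finrank ℝ V + 1)) (c' := 12 / 10 * #Q / (Module.finrank ℝ V + 1))
    (by positivity) (by gcongr; norm_num)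
  set W := LinearMap.ker φ
  by_cases hx : (#Q : ℝ) / 24 ≤ #{p ∈ Q | (p, (1 : ℝ)) ∈ W}
  · refine mul_div_le_of_le_card_of_sparse (by linarith) hn hx
      (mod_cast Finset.card_filter_le _ _) hker ?_
    have hrank := W.finrank_quotient_add_finrank
    rw [Module.finrank_prod, Module.finrank_self] at hrank
    have hcodim : (Module.finrank ℝ V + 1 - Module.finrank ℝ W : ℝ) =
        Module.finrank ℝ ((V × ℝ) ⧸ W) := sub_eq_of_eq_add (mod_cast hrank.symm)
    rw [hcodim]
    exact_mod_cast card_mul_finrank_quotient_le_card_directions hQ W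
  · have hcard : (#{p ∈ Q | (p, (1 : ℝ)) ∈ W} : ℝ) + #{p ∈ Q | (p, (1 : ℝ)) ∉ W} = #Q :=
      mod_cast Finset.card_filter_add_card_filter_not _
    refine le_trans (mul_div_le_of_card_le_of_isotropic hd hn (by linarith)
      (card_mul_le_card_directions_of_isotropic (Q := {p ∈ Q | (p, (1 : ℝ)) ∉ W})
        (y := φ.toAffineMap.comp ((AffineMap.id ℝ V).prod (AffineMap.const ℝ V 1)))
        (fun p hp => (Finset.mem_filter.mp hp).2) hiso))
      (mod_cast Finset.card_le_card (directions_mono (Finset.filter_subset _ Q)))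

open scoped Classical in
/-- The directions of the lines joining the point `p` to the points of `Q`. -/
noncomputable def directionsFrom (p : V) (Q : Finset V) : Finset (Submodule ℝ V) :=
  Q.image fun q => Submodule.span ℝ {p - q}

lemma span_sub_mem_directionsFrom {Q : Finset V} {q : V} (p : V) (hq : q ∈ Q) :
    Submodule.span ℝ {p - q} ∈ directionsFrom p Q :=
  Finset.mem_image_of_mem _ hq

lemma directionsFrom_subset_directions_insert [DecidableEq V] {p : V} {Q : Finset V}
    (hp : p ∉ Q) :
    directionsFrom p Q ⊆ directions (insert p Q) :=
  Finset.image_subset_iff.mpr fun _ hq => span_sub_mem_directions (Finset.mem_insert_self _ _)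
    (Finset.mem_insert_of_mem hq) (ne_of_mem_of_not_mem hq hp).symm

lemma span_sub_comm {K V : Type*} [Ring K] [AddCommGroup V] [Module K V] (p q : V) :
    Submodule.span K {p - q} = Submodule.span K {q - p} := by
  rw [← Submodule.span_neg, Set.neg_singleton, neg_sub]

lemma span_sub_eq_of_span_sub_eq {K V : Type*} [DivisionRing K] [AddCommGroup V] [Module K V]
    {p q q' : V} (hqq' : q ≠ q') (h : Submodule.span K {p - q} = Submodule.span K {p - q'}) :
    Submodule.span K {q - q'} = Submodule.span K {p - q} := by
  refine span_singleton_eq_of_mem (sub_ne_zero.mpr hqq') ?_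
  rw [← sub_sub_sub_cancel_left q' q p]
  exact Submodule.sub_mem _ (h ▸ Submodule.mem_span_singleton_self _)
    (Submodule.mem_span_singleton_self _)

open scoped Classical in
lemma card_filter_notMem_line_le (Q : Finset V) {p₀ p₁ : V} (hp : p₀ ≠ p₁) :
    #{q ∈ Q | q - p₀ ∉ Submodule.span ℝ {p₀ - p₁}} ≤
      #(directionsFrom p₀ Q) * #(directionsFrom p₁ Q) := by
  rw [← Finset.card_product]
  refine Finset.card_le_card_of_injOn
    (fun q => (Submodule.span ℝ {p₀ - q}, Submodule.span ℝ {p₁ - q})) ?_ ?_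
  · intro q hq
    have hqQ := (Finset.mem_filter.mp hq).1
    exact Finset.mem_product.mpr
      ⟨span_sub_mem_directionsFrom p₀ hqQ, span_sub_mem_directionsFrom p₁ hqQ⟩
  · intro q hq q' _ heq
    obtain ⟨h₀, h₁⟩ := Prod.ext_iff.mp heq
    by_contra hqq'
    have hspan : Submodule.span ℝ {q - p₀} = Submodule.span ℝ {q - p₁} := by
      rw [span_sub_comm, ← span_sub_eq_of_span_sub_eq hqq' h₀,
        span_sub_eq_of_span_sub_eq hqq' h₁, span_sub_comm]
    refine (Finset.mem_filter.mp hq).2 ?_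
    rw [span_sub_eq_of_span_sub_eq hp hspan]
    exact Submodule.mem_span_singleton_self _

open scoped Classical in
lemma card_filter_mem_line_le (Q : Finset V) {p p₀ v : V} (hp : p - p₀ ∉ Submodule.span ℝ {v}) :
    #{q ∈ Q | q - p₀ ∈ Submodule.span ℝ {v}} ≤ #(directionsFrom p Q) := by
  refine Finset.card_le_card_of_injOn (fun q => Submodule.span ℝ {p - q}) ?_ ?_
  · exact fun q hq => span_sub_mem_directionsFrom p (Finset.mem_filter.mp hq).1
  · intro q hq q' hq' heq
    have hqv := (Finset.mem_filter.mp hq).2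
    have hsub := Submodule.sub_mem _ hqv (Finset.mem_filter.mp hq').2
    rw [sub_sub_sub_cancel_right] at hsub
    by_contra hqq'
    have hpq : p - q ∈ Submodule.span ℝ {v} := by
      rw [← span_singleton_eq_of_mem (sub_ne_zero.mpr hqq') hsub,
        span_sub_eq_of_span_sub_eq hqq' heq]
      exact Submodule.mem_span_singleton_self _
    exact hp (sub_add_sub_cancel p q p₀ ▸ Submodule.add_mem _ hpq hqv)

open scoped Classical in
lemma exists_card_le_card_filter_mem_line_add [DecidableEq V] {m : ℕ} {P Q : Finset V}
    (hQ : m ^ 2 + m + 1 ≤ #Q) (hfew : ∀ p ∈ P \ Q, #(directionsFrom p Q) ≤ m) (hPQ : 1 < #(P \ Q)) :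
    ∃ p₀ ∈ P, ∃ p₁ ∈ P, p₀ ≠ p₁ ∧ #P ≤ #{p ∈ P | p - p₀ ∈ Submodule.span ℝ {p₀ - p₁}} + m ^ 2 := by
  obtain ⟨p₀, hp₀, p₁, hp₁, hne⟩ := Finset.one_lt_card.mp hPQ
  refine ⟨p₀, (Finset.mem_sdiff.mp hp₀).1, p₁, (Finset.mem_sdiff.mp hp₁).1, hne, ?_⟩
  have hoff : #{q ∈ Q | q - p₀ ∉ Submodule.span ℝ {p₀ - p₁}} ≤ m ^ 2 :=
    (card_filter_notMem_line_le Q hne).trans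
      ((Nat.mul_le_mul (hfew p₀ hp₀) (hfew p₁ hp₁)).trans_eq (sq m).symm)
  have hon : m < #{q ∈ Q | q - p₀ ∈ Submodule.span ℝ {p₀ - p₁}} := by
    have := Q.card_filter_add_card_filter_not fun q => q - p₀ ∈ Submodule.span ℝ {p₀ - p₁}
    lia
  rw [← P.card_filter_add_card_filter_not fun q => q - p₀ ∈ Submodule.span ℝ {p₀ - p₁}]
  refine Nat.add_le_add_left ((Finset.card_le_card fun p hp => ?_).trans hoff) _
  obtain ⟨hpP, hpL⟩ := Finset.mem_filter.mp hp
  refine Finset.mem_filter.mpr ⟨by_contra fun hpQ => ?_, hpL⟩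
  exact (hon.trans_le (card_filter_mem_line_le Q hpL)).not_ge
    (hfew p (Finset.mem_sdiff.mpr ⟨hpP, hpQ⟩))

end Directions

section RationalDirections

open scoped Finset

variable {ι : Type*} {F : IntermediateField ℚ ℝ}

-- An `F`-linear retraction of `ℝ` onto `F` turns the coefficients of the two lines at `p` into
-- coefficients in `F`; the coefficients are unique, so they were already in `F`.
lemma forall_apply_mem_of_sub_mem_span {p u v x y : EuclideanSpace ℝ ι} (hu : ∀ c, u c ∈ F)
    (hv : ∀ c, v c ∈ F) (hx : ∀ c, x c ∈ F) (hy : ∀ c, y c ∈ F)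
    (hxy : x ∉ Submodule.span ℝ {y}) (hpu : p - u ∈ Submodule.span ℝ {x})
    (hpv : p - v ∈ Submodule.span ℝ {y}) (c : ι) : p c ∈ F := by
  obtain ⟨s, hs⟩ := Submodule.mem_span_singleton.mp hpu
  obtain ⟨t, ht⟩ := Submodule.mem_span_singleton.mp hpv
  obtain ⟨π, hπ⟩ := (Algebra.linearMap F ℝ).exists_leftInverse_of_injective
    (LinearMap.ker_eq_bot.mpr (algebraMap F ℝ).injective)
  have hπF (a : F) : π (a : ℝ) = a := LinearMap.congr_fun hπ a
  have hπmul (r : ℝ) {a : ℝ} (ha : a ∈ F) : (π (r * a) : ℝ) = π r * a := by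
    rw [mul_comm, show a * r = (⟨a, ha⟩ : F) • r from rfl, map_smul, mul_comm]
    rfl
  have hst (c : ι) : s * x c - t * y c = v c - u c := by
    have hsub : s • x - t • y = v - u := by rw [hs, ht, sub_sub_sub_cancel_left]
    exact congrArg (fun w : EuclideanSpace ℝ ι => w c) hsub
  have hπst (c : ι) : (π s : ℝ) * x c - π t * y c = v c - u c := by
    have h := congrArg (fun r => (π r : ℝ)) (hst c)
    rw [map_sub, show v c - u c = ((⟨_, F.sub_mem (hv c) (hu c)⟩ : F) : ℝ) from rfl, hπF] at h
    simpa [hπmul s (hx c), hπmul t (hy c)] using h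
  have hs_mem : s = π s := by
    by_contra hne
    refine hxy (Submodule.mem_span_singleton.mpr ⟨(s - π s)⁻¹ * (t - π t), PiLp.ext fun c => ?_⟩)
    have h := hst c
    have h' := hπst c
    rw [PiLp.smul_apply, smul_eq_mul, mul_assoc, inv_mul_eq_iff_eq_mul₀ (sub_ne_zero.mpr hne)]
    linarith
  have hpc : p c = π s * x c + u c := by
    rw [← hs_mem, eq_comm, ← eq_sub_iff_add_eq]
    exact congrArg (fun w : EuclideanSpace ℝ ι => w c) hs
  exact hpc ▸ F.add_mem (F.mul_mem (π s).2 (hx c)) (hu c)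

lemma card_directions_add_card_directionsFrom_le [DecidableEq (EuclideanSpace ℝ ι)]
    {Q : Finset (EuclideanSpace ℝ ι)} {p : EuclideanSpace ℝ ι} (hQ : ∀ q ∈ Q, ∀ c, q c ∈ F)
    (hp : ¬ ∀ c, p c ∈ F) :
    #(directions Q) + #(directionsFrom p Q) ≤ #(directions (insert p Q)) + 1 := by
  classical
  have hpQ : p ∉ Q := fun h => hp (hQ p h)
  rw [← Finset.card_union_add_card_inter]
  refine Nat.add_le_add (Finset.card_le_card (Finset.union_subset
    (directions_mono (Finset.subset_insert p Q)) (directionsFrom_subset_directions_insert hpQ)))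
    (Finset.card_le_one.mpr ?_)
  have hrational (L) (hL : L ∈ directions Q ∩ directionsFrom p Q) :
      ∃ u ∈ Q, ∃ x : EuclideanSpace ℝ ι,
        (∀ c, x c ∈ F) ∧ p - u ∈ Submodule.span ℝ {x} ∧ L = Submodule.span ℝ {x} := by
    obtain ⟨hLQ, hLp⟩ := Finset.mem_inter.mp hL
    obtain ⟨⟨a, b⟩, hab, rfl⟩ := Finset.mem_image.mp hLQ
    obtain ⟨u, hu, hspan⟩ := Finset.mem_image.mp hLp
    rw [Finset.mem_offDiag] at hab
    exact ⟨u, hu, a - b, fun c => F.sub_mem (hQ a hab.1 c) (hQ b hab.2.1 c),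
      hspan ▸ Submodule.mem_span_singleton_self _, rfl⟩
  intro L hL L' hL'
  obtain ⟨u, hu, x, hx, hpu, rfl⟩ := hrational L hL
  obtain ⟨v, hv, y, hy, hpv, rfl⟩ := hrational L' hL'
  by_contra hne
  refine hp (forall_apply_mem_of_sub_mem_span (hQ u hu) (hQ v hv) hx hy (fun hxy => ?_) hpu hpv)
  refine hne (span_singleton_eq_of_mem ?_ hxy)
  rintro rfl
  simp only [Submodule.span_zero_singleton, Submodule.mem_bot, sub_eq_zero] at hpu
  exact hpQ (hpu ▸ hu)

variable [Fintype ι]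

open scoped Classical in
/-- The real numbers occurring as coordinates of points of `P`. -/
noncomputable def coordinates (P : Finset (EuclideanSpace ℝ ι)) : Finset ℝ :=
  (P ×ˢ Finset.univ).image fun x => x.1 x.2

lemma card_coordinates_le (P : Finset (EuclideanSpace ℝ ι)) :
    #(coordinates P) ≤ #P * Fintype.card ι :=
  Finset.card_image_le.trans_eq (by rw [Finset.card_product, Finset.card_univ])

lemma apply_mem_coordinates {P : Finset (EuclideanSpace ℝ ι)} {p : EuclideanSpace ℝ ι}
    (hp : p ∈ P) (c : ι) : p c ∈ coordinates P :=
  Finset.mem_image.mpr ⟨(p, c), Finset.mem_product.mpr ⟨hp, Finset.mem_univ c⟩, rfl⟩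

lemma apply_mem_adjoin_coordinates {P : Finset (EuclideanSpace ℝ ι)} {Z : Set ℝ}
    (hZ : (coordinates P : Set ℝ) ⊆ Z) {p : EuclideanSpace ℝ ι} (hp : p ∈ P) (c : ι) :
    p c ∈ IntermediateField.adjoin ℚ Z :=
  IntermediateField.subset_adjoin ℚ Z (hZ (apply_mem_coordinates hp c))

open scoped Classical in
/- `Q` is maximal among the sets obeying the bound on generators: a point seeing more than `m`
directions can be added, since if it is not rational over the current field, then at least `m` of
these directions are new and pay for adjoining its coordinates. -/
lemma exists_saturated_superset (m : ℕ) {S P : Finset (EuclideanSpace ℝ ι)} (hSP : S ⊆ P) :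
    ∃ Q, S ⊆ Q ∧ Q ⊆ P ∧ (∀ p ∈ P \ Q, #(directionsFrom p Q) ≤ m) ∧
      ∃ Z : Finset ℝ, m * #Z ≤ Fintype.card ι * (m * #S + #(directions Q)) ∧
        ∀ q ∈ Q, ∀ c, q c ∈ IntermediateField.adjoin ℚ (Z : Set ℝ) := by
  let generated (Q : Finset (EuclideanSpace ℝ ι)) : Prop :=
    ∃ Z : Finset ℝ, m * #Z ≤ Fintype.card ι * (m * #S + #(directions Q)) ∧
      ∀ q ∈ Q, ∀ c, q c ∈ IntermediateField.adjoin ℚ (Z : Set ℝ)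
  have hS : S ∈ P.powerset.filter generated :=
    Finset.mem_filter.mpr ⟨Finset.mem_powerset.mpr hSP, coordinates S,
      by nlinarith [card_coordinates_le S], fun _ => apply_mem_adjoin_coordinates subset_rfl⟩
  obtain ⟨Q, hSQ, hQ⟩ := (P.powerset.filter generated).exists_le_maximal hS
  obtain ⟨hQP, Z, hZ, hQZ⟩ := Finset.mem_filter.mp hQ.prop
  rw [Finset.mem_powerset] at hQP
  refine ⟨Q, hSQ, hQP, fun p hp => ?_, Z, hZ, hQZ⟩
  obtain ⟨hpP, hpQ⟩ := Finset.mem_sdiff.mp hp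
  by_contra! hlt
  have hinsert : ¬ generated (insert p Q) := fun hgen => hpQ <| hQ.le_of_ge
    (Finset.mem_filter.mpr ⟨Finset.mem_powerset.mpr (Finset.insert_subset hpP hQP), hgen⟩)
    (Finset.subset_insert p Q) (Finset.mem_insert_self p Q)
  by_cases hpZ : ∀ c, p c ∈ IntermediateField.adjoin ℚ (Z : Set ℝ)
  · have hmono := Finset.card_le_card (directions_mono (Finset.subset_insert p Q))
    exact hinsert ⟨Z, by nlinarith, Finset.forall_mem_insert _ _ _ |>.mpr ⟨hpZ, hQZ⟩⟩
  · have hdir : #(directions Q) + m ≤ #(directions (insert p Q)) := Nat.le_of_succ_le_succ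
      ((Nat.add_le_add_left hlt _).trans (card_directions_add_card_directionsFrom_le hQZ hpZ))
    have hcoord := card_coordinates_le {p}
    have hcard := Finset.card_union_le Z (coordinates {p})
    rw [Finset.card_singleton, one_mul] at hcoord
    refine hinsert ⟨Z ∪ coordinates {p}, ?_, Finset.forall_mem_insert _ _ _ |>.mpr ⟨?_, ?_⟩⟩
    · calc m * #(Z ∪ coordinates {p})
          ≤ m * #Z + Fintype.card ι * m := by nlinarith
        _ ≤ Fintype.card ι * (m * #S + (#(directions Q) + m)) := by linarith
        _ ≤ Fintype.card ι * (m * #S + #(directions (insert p Q))) := by gcongr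
    · exact apply_mem_adjoin_coordinates (by simp) (Finset.mem_singleton_self p)
    · exact fun q hq c => IntermediateField.adjoin.mono ℚ _ _ (by simp) (hQZ q hq c)

open scoped Classical in
lemma exists_generators_or_exists_line {m : ℕ} {P : Finset (EuclideanSpace ℝ ι)}
    (hP : m ^ 2 + m + 1 ≤ #P) :
    (∃ Z : Finset ℝ, m * #Z ≤ Fintype.card ι * (m * (m ^ 2 + m + 2) + #(directions P)) ∧
      ∀ p ∈ P, ∀ c, p c ∈ IntermediateField.adjoin ℚ (Z : Set ℝ)) ∨
    ∃ p₀ ∈ P, ∃ p₁ ∈ P, p₀ ≠ p₁ ∧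
      #P ≤ #{p ∈ P | p - p₀ ∈ Submodule.span ℝ {p₀ - p₁}} + m ^ 2 := by
  obtain ⟨S, hSP, hS⟩ := Finset.exists_subset_card_eq hP
  obtain ⟨Q, hSQ, hQP, hfew, Z, hZ, hQZ⟩ := exists_saturated_superset m hSP
  obtain hone | hPQ := le_or_gt #(P \ Q) 1
  · refine .inl ⟨Z ∪ coordinates (P \ Q), ?_, fun p hp => ?_⟩
    · have hcoord : #(coordinates (P \ Q)) ≤ Fintype.card ι :=
        (card_coordinates_le _).trans (by nlinarith)
      have hcard := Finset.card_union_le Z (coordinates (P \ Q))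
      have hmono := Finset.card_le_card (directions_mono hQP)
      calc m * #(Z ∪ coordinates (P \ Q))
          ≤ m * #Z + Fintype.card ι * m := by nlinarith
        _ ≤ Fintype.card ι * (m * (#S + 1) + #(directions Q)) := by linarith
        _ ≤ _ := by rw [hS]; gcongr
    · by_cases hpQ : p ∈ Q
      · exact fun c => IntermediateField.adjoin.mono ℚ _ _ (by simp) (hQZ p hpQ c)
      · exact apply_mem_adjoin_coordinates (by simp) (Finset.mem_sdiff.mpr ⟨hp, hpQ⟩)
  · exact .inr (exists_card_le_card_filter_mem_line_add
      (hS.symm.le.trans (Finset.card_le_card hSQ)) hfew hPQ)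

end RationalDirections

section DistinctDistances

open scoped Finset

variable {d : ℕ} {N : NormOn d}

open scoped Classical in
/-- The set of distances determined by a finite set of points. -/
noncomputable def NormOn.distances (N : NormOn d) (P : Finset (EuclideanSpace ℝ (Fin d))) :
    Finset ℝ :=
  P.offDiag.image fun x => N.1 (x.1 - x.2)

lemma NormOn.mem_distances {P : Finset (EuclideanSpace ℝ (Fin d))} {r : ℝ} :
    r ∈ N.distances P ↔ ∃ p ∈ P, ∃ q ∈ P, p ≠ q ∧ N.1 (p - q) = r := by
  simp only [NormOn.distances, Finset.mem_image, Finset.mem_offDiag, Prod.exists, and_assoc,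
    exists_and_left]

lemma NormOn.IsGeneric.card_le_card_add_card_distances (hN : N.IsGeneric) {Z : Finset ℝ}
    {P X : Finset (EuclideanSpace ℝ (Fin d))}
    (hX : ∀ x ∈ X, ∃ p ∈ P, ∃ q ∈ P, p ≠ q ∧ p - q = x)
    (hspan : (X : Set (EuclideanSpace ℝ (Fin d))).InjOn fun x => Submodule.span ℝ {x})
    (hZ : ∀ x ∈ X, ∀ c, x c ∈ IntermediateField.adjoin ℚ (Z : Set ℝ)) :
    #X ≤ #Z + #(N.distances P) := by
  classical
  have h0 : 0 ∉ X := fun h0 => by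
    obtain ⟨p, -, q, -, hpq, h⟩ := hX 0 h0
    exact hpq (sub_eq_zero.mp h)
  refine (hN X Z h0 hspan hZ).trans
    (Nat.add_le_add_left (Finset.card_le_card (Finset.image_subset_iff.mpr fun x hx => ?_)) _)
  obtain ⟨p, hp, q, hq, hpq, rfl⟩ := hX x hx
  exact NormOn.mem_distances.mpr ⟨p, hp, q, hq, hpq, rfl⟩

lemma NormOn.IsGeneric.card_directions_le (hN : N.IsGeneric) {Z : Finset ℝ}
    {P : Finset (EuclideanSpace ℝ (Fin d))}
    (hZ : ∀ p ∈ P, ∀ c, p c ∈ IntermediateField.adjoin ℚ (Z : Set ℝ)) :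
    #(directions P) ≤ #Z + #(N.distances P) := by
  classical
  let D : Set (EuclideanSpace ℝ (Fin d)) := {x | ∃ p ∈ P, ∃ q ∈ P, p ≠ q ∧ p - q = x}
  have hsurj : D.SurjOn (fun x => Submodule.span ℝ {x}) (directions P) := fun L hL => by
    obtain ⟨⟨p, q⟩, hpq, rfl⟩ := Finset.mem_image.mp hL
    obtain ⟨hp, hq, hne⟩ := Finset.mem_offDiag.mp hpq
    exact ⟨p - q, ⟨p, hp, q, hq, hne, rfl⟩, rfl⟩
  obtain ⟨X, hXD, hspan, himage⟩ := Finset.exists_subset_injOn_image_eq_of_surjOn _ _ hsurj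
  rw [← himage, Finset.card_image_of_injOn hspan]
  refine hN.card_le_card_add_card_distances (fun x hx => hXD hx) hspan fun x hx c => ?_
  obtain ⟨p, hp, q, hq, -, rfl⟩ := hXD hx
  exact sub_mem (hZ p hp c) (hZ q hq c)

lemma NormOn.apply_mem_of_sub_mem_span {F : IntermediateField ℚ ℝ}
    {a a₀ v : EuclideanSpace ℝ (Fin d)} (hv : N.1 v = 1) (ha₀F : ∀ c, a₀ c ∈ F)
    (hvF : ∀ c, v c ∈ F) (hdist : N.1 (a - a₀) ∈ F) (ha : a - a₀ ∈ Submodule.span ℝ {v})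
    (c : Fin d) : a c ∈ F := by
  obtain ⟨s, hs⟩ := Submodule.mem_span_singleton.mp ha
  rw [← hs, map_smul_eq_mul, hv, mul_one, Real.norm_eq_abs] at hdist
  have hsF : s ∈ F := by
    obtain h | h := abs_choice s
    · exact h ▸ hdist
    · exact neg_mem_iff.mp (h ▸ hdist)
  rw [← sub_add_cancel a a₀, ← hs]
  exact add_mem (mul_mem hsF (hvF c)) (ha₀F c)

lemma NormOn.exists_eq_one_and_span_eq (N : NormOn d) {v : EuclideanSpace ℝ (Fin d)}
    (hv : v ≠ 0) : ∃ w, N.1 w = 1 ∧ Submodule.span ℝ {w} = Submodule.span ℝ {v} := by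
  have hpos := N.pos hv
  refine ⟨(N.1 v)⁻¹ • v, ?_, Submodule.span_singleton_smul_eq (inv_pos.mpr hpos).ne'.isUnit v⟩
  rw [map_smul_eq_mul, norm_inv, Real.norm_of_nonneg hpos.le, inv_mul_cancel₀ hpos.ne']

open scoped Classical in
lemma NormOn.exists_generators_of_line (N : NormOn d) {P B : Finset (EuclideanSpace ℝ (Fin d))}
    {a₀ v : EuclideanSpace ℝ (Fin d)} (ha₀ : a₀ ∈ P) (hv : v ≠ 0) :
    ∃ Z : Finset ℝ, #Z ≤ #(N.distances P) + (#B + 2) * d ∧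
      (∀ a ∈ P, a - a₀ ∈ Submodule.span ℝ {v} →
        ∀ c, a c ∈ IntermediateField.adjoin ℚ (Z : Set ℝ)) ∧
      ∀ b ∈ B, ∀ c, b c ∈ IntermediateField.adjoin ℚ (Z : Set ℝ) := by
  obtain ⟨w, hw, hwv⟩ := N.exists_eq_one_and_span_eq hv
  let C := B ∪ {a₀, w}
  have hcoord (x) (hx : x ∈ C) (c) : x c ∈
      IntermediateField.adjoin ℚ ((N.distances P ∪ coordinates C : Finset ℝ) : Set ℝ) :=
    apply_mem_adjoin_coordinates (by simp) hx c
  refine ⟨N.distances P ∪ coordinates C, ?_, fun a ha hav => ?_,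
    fun b hb => hcoord b (Finset.mem_union_left _ hb)⟩
  · calc #(N.distances P ∪ coordinates C)
        ≤ #(N.distances P) + #C * d :=
          (Finset.card_union_le _ _).trans (Nat.add_le_add_left
            ((card_coordinates_le C).trans_eq (by rw [Fintype.card_fin])) _)
      _ ≤ #(N.distances P) + (#B + 2) * d := by
          gcongr
          exact (Finset.card_union_le _ _).trans (Nat.add_le_add_left Finset.card_le_two _)
  · refine N.apply_mem_of_sub_mem_span hw (hcoord a₀ (by simp [C])) (hcoord w (by simp [C])) ?_
      (hwv ▸ hav)
    obtain rfl | hne := eq_or_ne a a₀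
    · rw [sub_self, map_zero]
      exact zero_mem _
    · exact IntermediateField.subset_adjoin ℚ _ (Finset.mem_union_left _
        (NormOn.mem_distances.mpr ⟨a, ha, a₀, ha₀, hne, rfl⟩))

lemma prodMk_one_mem_span_pair {V : Type*} [AddCommGroup V] [Module ℝ V] {a a₀ v : V}
    (ha : a - a₀ ∈ Submodule.span ℝ {v}) :
    (a, (1 : ℝ)) ∈ Submodule.span ℝ {(a₀, (1 : ℝ)), (v, 0)} := by
  obtain ⟨s, hs⟩ := Submodule.mem_span_singleton.mp ha
  exact Submodule.mem_span_pair.mpr ⟨1, s, by simp [hs]⟩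

lemma finrank_sub_one_le_finrank_quotient_span_pair {V : Type*} [AddCommGroup V] [Module ℝ V]
    [FiniteDimensional ℝ V] (x y : V × ℝ) :
    Module.finrank ℝ V - 1 ≤ Module.finrank ℝ ((V × ℝ) ⧸ Submodule.span ℝ {x, y}) := by
  classical
  have hpair : Module.finrank ℝ (Submodule.span ℝ {x, y}) ≤ 2 := by
    have hcard := finrank_span_finset_le_card (R := ℝ) ({x, y} : Finset (V × ℝ))
    rw [Set.finrank, Finset.coe_pair] at hcard
    exact hcard.trans Finset.card_le_two
  have hadd := (Submodule.span ℝ {x, y}).finrank_quotient_add_finrank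
  rw [Module.finrank_prod, Module.finrank_self] at hadd
  lia

lemma NormOn.IsGeneric.card_mul_card_le (hN : N.IsGeneric) {Z : Finset ℝ}
    {P A B : Finset (EuclideanSpace ℝ (Fin d))}
    {W : Submodule ℝ (EuclideanSpace ℝ (Fin d) × ℝ)} (hAP : A ⊆ P) (hBP : B ⊆ P)
    (hA : ∀ a ∈ A, (a, (1 : ℝ)) ∈ W)
    (hB : LinearIndepOn ℝ (fun p => W.mkQ (p, 1)) (B : Set (EuclideanSpace ℝ (Fin d))))
    (hAZ : ∀ a ∈ A, ∀ c, a c ∈ IntermediateField.adjoin ℚ (Z : Set ℝ))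
    (hBZ : ∀ b ∈ B, ∀ c, b c ∈ IntermediateField.adjoin ℚ (Z : Set ℝ)) :
    #A * #B ≤ #Z + #(N.distances P) := by
  classical
  let sub (x : EuclideanSpace ℝ (Fin d) × EuclideanSpace ℝ (Fin d)) := x.2 - x.1
  have hinj : Set.InjOn ((fun x => Submodule.span ℝ {x}) ∘ sub) (A ×ˢ B : Finset _) := by
    refine (injOn_span_sub_of_linearIndepOn_mkQ hB).mono fun x hx => ?_
    exact ⟨hA _ (Finset.mem_product.mp hx).1, (Finset.mem_product.mp hx).2⟩
  rw [← Finset.card_product, ← Finset.card_image_of_injOn hinj.of_comp]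
  refine hN.card_le_card_add_card_distances ?_ ?_ ?_
  · simp only [Finset.forall_mem_image, Finset.mem_product]
    rintro ⟨a, b⟩ ⟨ha, hb⟩
    exact ⟨b, hBP hb, a, hAP ha, ne_of_linearIndepOn_mkQ hB (hA a ha) hb, rfl⟩
  · rw [Finset.coe_image]
    exact hinj.image_of_comp
  · simp only [Finset.forall_mem_image, Finset.mem_product]
    rintro ⟨a, b⟩ ⟨ha, hb⟩ c
    exact sub_mem (hBZ b hb c) (hAZ a ha c)

open scoped Classical in
lemma NormOn.IsGeneric.sub_one_mul_card_line_le (hN : N.IsGeneric)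
    {P : Finset (EuclideanSpace ℝ (Fin d))}
    (hP : affineSpan ℝ (P : Set (EuclideanSpace ℝ (Fin d))) = ⊤)
    {a₀ v : EuclideanSpace ℝ (Fin d)} (ha₀ : a₀ ∈ P) (hv : v ≠ 0) :
    (d - 1) * #{a ∈ P | a - a₀ ∈ Submodule.span ℝ {v}} ≤
      (d - 1 + 2) * d + 2 * #(N.distances P) := by
  let W := Submodule.span ℝ {(a₀, (1 : ℝ)), (v, 0)}
  obtain ⟨B₀, hB₀P, hB₀, hcard₀⟩ := exists_linearIndepOn_mkQ_card_eq hP W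
  have hdB₀ : d - 1 ≤ #B₀ := by
    simpa [hcard₀] using finrank_sub_one_le_finrank_quotient_span_pair (a₀, (1 : ℝ)) (v, 0)
  obtain ⟨B, hBB₀, hcard⟩ := Finset.exists_subset_card_eq hdB₀
  obtain ⟨Z, hZcard, hZA, hZB⟩ := N.exists_generators_of_line (B := B) ha₀ hv
  have hle := hN.card_mul_card_le (W := W) (Finset.filter_subset _ P) (hBB₀.trans hB₀P)
    (fun a ha => prodMk_one_mem_span_pair (Finset.mem_filter.mp ha).2)
    (hB₀.mono (Finset.coe_subset.mpr hBB₀))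
    (fun a ha => hZA a (Finset.mem_filter.mp ha).1 (Finset.mem_filter.mp ha).2) hZB
  rw [hcard] at hle hZcard
  linarith

lemma sub_mul_le_of_few_generators {d m M n l z k ε : ℝ} (hn : 0 ≤ n) (hm : 0 < m)
    (hdm : d ≤ m) (hmε : d ^ 2 ≤ m * ε) (hnε : 2 * (d * M) ≤ n * ε)
    (hz : m * z ≤ d * (m * M + l)) (hlz : l ≤ z + k) (hl : d * n / 48 ≤ l) :
    (1 / 48 * d - ε) * n ≤ k := by
  have hdir : (m - d) * (d * n / 48) ≤ (m - d) * l :=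
    mul_le_mul_of_nonneg_left hl (sub_nonneg.mpr hdm)
  have hdist : m * l ≤ d * (m * M + l) + m * k := by
    calc m * l ≤ m * (z + k) := mul_le_mul_of_nonneg_left hlz hm.le
      _ ≤ d * (m * M + l) + m * k := by linarith
  have hn_cost : m * (2 * (d * M)) ≤ m * (n * ε) := mul_le_mul_of_nonneg_left hnε hm.le
  have hm_cost : n * d ^ 2 ≤ n * (m * ε) := mul_le_mul_of_nonneg_left hmε hn
  refine le_of_mul_le_mul_left ?_ hm
  linarith [mul_nonneg hn (sq_nonneg d)]

lemma mul_le_of_many_collinear {d m n a k : ℝ} (hd : 2 ≤ d) (hmn : 2 * m ^ 2 ≤ n)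
    (hdn : 6 * (d + 1) ≤ n) (hna : n ≤ a + m ^ 2)
    (ha : (d - 1) * a ≤ (d - 1 + 2) * d + 2 * k) : 1 / 48 * d * n ≤ k := by
  have hline : (d - 1) * (n / 2) ≤ (d - 1) * a :=
    mul_le_mul_of_nonneg_left (by linarith) (by linarith)
  have hconst : d * (6 * (d + 1)) ≤ d * n := mul_le_mul_of_nonneg_left hdn (by linarith)
  nlinarith

lemma NormOn.IsGeneric.sub_mul_card_le_card_distances (hN : N.IsGeneric) (hd : 2 ≤ d) {m : ℕ}
    {ε : ℝ} (hε : 0 < ε) (hm : d ^ 2 / ε + d ≤ m) {P : Finset (EuclideanSpace ℝ (Fin d))}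
    (hP : affineSpan ℝ (P : Set (EuclideanSpace ℝ (Fin d))) = ⊤)
    (hcard : 2 * (d * (m ^ 2 + m + 2)) / ε + 6 * (m ^ 2 + m + d + 1) ≤ (#P : ℝ)) :
    (1 / 48 * d - ε) * #P ≤ (#(N.distances P) : ℝ) := by
  have hd' : (2 : ℝ) ≤ d := mod_cast hd
  have hdε : 0 ≤ (d : ℝ) ^ 2 / ε := by positivity
  have hMε : 0 ≤ 2 * (d * ((m : ℝ) ^ 2 + m + 2)) / ε := by positivity
  have hm2 : 0 ≤ (m : ℝ) ^ 2 := sq_nonneg _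
  have hmP : m ^ 2 + m + 1 ≤ #P := by
    rw [← Nat.cast_le (α := ℝ)]
    push_cast
    linarith
  obtain ⟨Z, hZ, hPZ⟩ | ⟨p₀, hp₀, p₁, -, hne, hline⟩ := exists_generators_or_exists_line hmP
  · rw [Fintype.card_fin] at hZ
    refine sub_mul_le_of_few_generators (m := m) (M := m ^ 2 + m + 2) (z := #Z)
      (l := #(directions P)) (by positivity) (by linarith) (by linarith) ?_ ?_
      (mod_cast hZ) (mod_cast hN.card_directions_le hPZ) ?_
    · exact (div_le_iff₀ hε).mp (by linarith)
    · exact (div_le_iff₀ hε).mp (by linarith)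
    · simpa using finrank_mul_card_div_le_card_directions (by simpa using hd) hP
  · have hle := hN.sub_one_mul_card_line_le hP hp₀ (sub_ne_zero.mpr hne)
    rw [← Nat.cast_le (α := ℝ)] at hle hline
    push_cast [Nat.cast_sub (one_le_two.trans hd)] at hle hline
    have hk := mul_le_of_many_collinear hd' (by linarith) (by linarith) hline hle
    nlinarith [mul_nonneg hε.le (Nat.cast_nonneg (α := ℝ) #P)]

end DistinctDistances

/-- **Theorem 1.5** (with `b = 1/48`). For each fixed `d ≥ 2`, for all norms on
`ℝ^d` but a meagre set (in the topology of the Hausdorff distance between unit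
balls) the following holds: for every `ε > 0` there is `n₀` such that every set
of `n > n₀` points affinely spanning `ℝ^d` determines at least `(d/48 − ε)·n`
distinct distances. -/
theorem typical_norms_many_distances (d : ℕ) (hd : 2 ≤ d) :
    IsMeagre {N : NormOn d |
      ¬ (∀ ε : ℝ, 0 < ε → ∃ n₀ : ℕ, ∀ n : ℕ, n₀ < n →
          ∀ P : Finset (EuclideanSpace ℝ (Fin d)),
            P.card = n →
            affineSpan ℝ (P : Set (EuclideanSpace ℝ (Fin d))) = ⊤ →
            ((1 / 48 : ℝ) * d - ε) * n ≤
              ({r : ℝ | ∃ p ∈ P, ∃ q ∈ P, p ≠ q ∧ N.1 (p - q) = r}).ncard)} := by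
  refine (isMeagre_setOf_not_isGeneric d).mono fun N hN => ?_
  refine fun hgeneric => hN fun ε hε => ?_
  obtain ⟨m, hm⟩ := exists_nat_ge ((d : ℝ) ^ 2 / ε + d)
  obtain ⟨n₀, hn₀⟩ := exists_nat_ge (2 * (d * ((m : ℝ) ^ 2 + m + 2)) / ε + 6 * (m ^ 2 + m + d + 1))
  refine ⟨n₀, fun n hn P hcard hP => ?_⟩
  subst hcard
  have hdistances : {r : ℝ | ∃ p ∈ P, ∃ q ∈ P, p ≠ q ∧ N.1 (p - q) = r} = N.distances P :=
    Set.ext fun _ => NormOn.mem_distances.symm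
  rw [hdistances, Set.ncard_coe_finset]
  exact hgeneric.sub_mul_card_le_card_distances hd hε hm hP (hn₀.trans (mod_cast hn.le))
end

section
/- For every integer d ≥ 2, every set P of n points in ℝ^d whose affine span is all of ℝ^d determines at least n − 1 lines with pairwise distinct directions; that is, there exist at least n − 1 pairs (p_i, q_i) of distinct points of P such that the difference vectors q_i − p_i are pairwise non-parallel. -/
/-!
Project injectively to a plane and let a functional turn through a full circle. While no direction
of a line through two of the points is passed, the half of the points on which the functional is
smallest does not change; it becomes its complement every half turn. It changes only at certain
directions, the crossings, where a jump `j` (the number of points exchanged) takes place. The lines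
joining the points exchanged at one crossing to those exchanged at the next have at least
`j + j' - 1` directions, all passed strictly between the two crossings. The jumps in half a turn sum
to at least `n / 2` and each of them is counted twice, so for even `n` there are at least `n`
directions (Ungar). For odd `n`, delete a point; if the remaining points are collinear, the lines
joining them to the deleted one already have `n - 1` directions.
-/

open Finset

namespace Ungar

section Counting

variable {α : Type*} [LinearOrder α]

theorem card_add_card_le_card_union_add_one {s t : Finset α} {r : α} (hs : ∀ a ∈ s, a ≤ r)
    (ht : ∀ b ∈ t, r ≤ b) : #s + #t ≤ #(s ∪ t) + 1 := by
  have hinter : s ∩ t ⊆ {r} := fun a ha => by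
    rw [mem_inter] at ha
    exact mem_singleton.2 ((hs a ha.1).antisymm (ht a ha.2))
  rw [← card_union_add_card_inter]
  exact Nat.add_le_add_left (card_le_card hinter) _

theorem card_Icc_add_card_Ioo_lt_card_Icc {S : Finset α} {a b s : α} (hab : a ≤ b) (hbs : b < s)
    (hs : s ∈ S) : #{τ ∈ S | a ≤ τ ∧ τ ≤ b} + #{τ ∈ S | b < τ ∧ τ < s} <
      #{τ ∈ S | a ≤ τ ∧ τ ≤ s} := by
  have hdisj : Disjoint {τ ∈ S | a ≤ τ ∧ τ ≤ b} {τ ∈ S | b < τ ∧ τ < s} :=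
    disjoint_filter.2 fun τ _ hτ hτ' => hτ.2.not_gt hτ'.1
  rw [← card_union_of_disjoint hdisj]
  refine card_lt_card ((ssubset_iff_of_subset ?_).2 ⟨s, ?_⟩) <;> grind

end Counting

section Crossing

variable {ι K : Type*} [Fintype ι] [DecidableEq ι] [LinearOrder K]

/-- A lower half of the points for the functional `h`: a set of half of the points, none of which
lies above a point outside the set. Ties of `h` may leave several choices. -/
structure IsLowerHalf (h : ι → K) (A : Finset ι) : Prop where
  card_eq : #A = #Aᶜ
  le : ∀ p ∈ A, ∀ q ∉ A, h p ≤ h q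

/-- The crossing move of Ungar's proof: as the functional rotates through `h`, the lower half
changes from `A` to `B`, which are therefore both lower halves for `h`. -/
structure IsCrossing (h : ι → K) (A B : Finset ι) : Prop where
  left : IsLowerHalf h A
  right : IsLowerHalf h B
  ne : A ≠ B

theorem exists_isLowerHalf (hcard : Even (Fintype.card ι)) (h : ι → K) :
    ∃ A, IsLowerHalf h A := by
  have initial_segment (k : ℕ) (hk : k ≤ Fintype.card ι) :
      ∃ A : Finset ι, #A = k ∧ ∀ p ∈ A, ∀ q ∉ A, h p ≤ h q := by
    induction k with
    | zero => exact ⟨∅, by simp⟩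
    | succ k ih =>
      obtain ⟨A, hA, hle⟩ := ih (by omega)
      have hne : Aᶜ.Nonempty := by rw [← card_pos, card_compl]; omega
      obtain ⟨z, hz, hmin⟩ := exists_min_image Aᶜ h hne
      refine ⟨insert z A, by rw [card_insert_of_notMem (mem_compl.1 hz), hA], ?_⟩
      simp only [mem_compl] at hz hmin
      clear ih
      grind
  obtain ⟨k, hk⟩ := hcard
  obtain ⟨A, hA, hle⟩ := initial_segment k (by omega)
  exact ⟨A, by rw [card_compl]; omega, hle⟩

theorem IsLowerHalf.card_eq_card {f g : ι → K} {A B : Finset ι} (hA : IsLowerHalf f A)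
    (hB : IsLowerHalf g B) : #A = #B := by
  have hA' := hA.card_eq
  have hB' := hB.card_eq
  rw [card_compl] at hA' hB'
  have := card_le_univ A
  have := card_le_univ B
  omega

theorem IsCrossing.symm {h : ι → K} {A B : Finset ι} (hAB : IsCrossing h A B) :
    IsCrossing h B A :=
  ⟨hAB.right, hAB.left, hAB.ne.symm⟩

theorem IsCrossing.card_sdiff_comm {h : ι → K} {A B : Finset ι} (hAB : IsCrossing h A B) :
    #(B \ A) = #(A \ B) :=
  Finset.card_sdiff_comm (hAB.right.card_eq_card hAB.left)

theorem IsCrossing.sdiff_nonempty {h : ι → K} {A B : Finset ι} (hAB : IsCrossing h A B) :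
    (B \ A).Nonempty := by
  rw [Finset.sdiff_nonempty]
  exact fun hBA => hAB.ne (eq_of_subset_of_card_le hBA (hAB.left.card_eq_card hAB.right).le).symm

theorem IsCrossing.apply_eq_apply {h : ι → K} {A B : Finset ι} (hAB : IsCrossing h A B) {p q : ι}
    (hp : p ∈ B \ A) (hq : q ∈ A \ B) : h p = h q := by
  rw [mem_sdiff] at hp hq
  exact (hAB.right.le p hp.1 q hq.2).antisymm (hAB.left.le q hq.1 p hp.2)

theorem IsCrossing.exists_level {h : ι → K} {A B : Finset ι} (hAB : IsCrossing h A B) :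
    ∃ c, (∀ i ∈ B, h i ≤ c) ∧ ∀ i ∈ B \ A, h i = c := by
  obtain ⟨q, hq⟩ := hAB.symm.sdiff_nonempty
  exact ⟨h q, fun i hi => hAB.right.le i hi q (mem_sdiff.1 hq).2,
    fun i hi => hAB.apply_eq_apply hi hq⟩

theorem IsLowerHalf.eq_of_injective {h : ι → K} (hinj : Function.Injective h) {A B : Finset ι}
    (hA : IsLowerHalf h A) (hB : IsLowerHalf h B) : A = B := by
  by_contra hne
  have hAB : IsCrossing h A B := ⟨hA, hB, hne⟩
  obtain ⟨p, hp⟩ := hAB.sdiff_nonempty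
  obtain ⟨q, hq⟩ := hAB.symm.sdiff_nonempty
  have hpq : p = q := hinj (hAB.apply_eq_apply hp hq)
  exact (mem_sdiff.1 hp).2 (hpq ▸ (mem_sdiff.1 hq).1)

theorem IsCrossing.eq_of_forall_le {h : ι → K} {A B : Finset ι} (hAB : IsCrossing h A B) {i j : ι}
    (hi : i ∈ B) (hj : j ∉ B) (hmax : ∀ k ∈ B, h k ≤ h i) (hmin : ∀ k ∉ B, h j ≤ h k) :
    h i = h j := by
  obtain ⟨p, hp⟩ := hAB.sdiff_nonempty
  obtain ⟨q, hq⟩ := hAB.symm.sdiff_nonempty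
  rw [mem_sdiff] at hp hq
  refine (hAB.right.le i hi j hj).antisymm ?_
  calc h j ≤ h q := hmin q hq.2
    _ ≤ h p := hAB.left.le q hq.1 p hp.2
    _ ≤ h i := hmax p hp.1

theorem IsLowerHalf.apply_eq_apply_of_compl {h : ι → K} {A : Finset ι} (hA : IsLowerHalf h A)
    (hAc : IsLowerHalf h Aᶜ) (i j : ι) : h i = h j := by
  have across {p q : ι} (hp : p ∈ A) (hq : q ∉ A) : h p = h q :=
    (hA.le p hp q hq).antisymm (hAc.le q (mem_compl.2 hq) p (notMem_compl.2 hp))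
  have hcard := hA.card_eq
  by_cases hi : i ∈ A <;> by_cases hj : j ∈ A
  · obtain ⟨k, hk⟩ := card_pos.1 (hcard ▸ card_pos.2 ⟨i, hi⟩)
    exact (across hi (mem_compl.1 hk)).trans (across hj (mem_compl.1 hk)).symm
  · exact across hi hj
  · exact (across hj hi).symm
  · obtain ⟨k, hk⟩ := card_pos.1 (hcard ▸ card_pos.2 ⟨i, mem_compl.2 hi⟩)
    exact (across hk hi).symm.trans (across hk hj)

end Crossing

section Fan

variable {ι K : Type*} [Fintype ι] [Field K] [LinearOrder K]

/-- The weights `β > 0` for which `f + β * g` ties two points that `f` and `g` order oppositely.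
They parametrize the directions met while rotating from `f` to `g`, both ends excluded. -/
def tieRatios (f g : ι → K) : Finset K :=
  ({e | f e.2 < f e.1 ∧ g e.1 < g e.2} : Finset (ι × ι)).image fun e =>
    (f e.1 - f e.2) / (g e.2 - g e.1)

theorem div_mem_tieRatios {f g : ι → K} {i j : ι} (hf : f j < f i) (hg : g i < g j) :
    (f i - f j) / (g j - g i) ∈ tieRatios f g :=
  mem_image_of_mem (fun e : ι × ι => (f e.1 - f e.2) / (g e.2 - g e.1))
    (mem_filter.2 ⟨mem_univ (i, j), hf, hg⟩)

variable [IsStrictOrderedRing K]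

theorem tieRatios_neg (f g : ι → K) : tieRatios (-f) (-g) = tieRatios f g := by
  have subset (f g : ι → K) : tieRatios (-f) (-g) ⊆ tieRatios f g := fun β hβ => by
    obtain ⟨⟨i, j⟩, hij, rfl⟩ := mem_image.1 hβ
    simp only [mem_filter, mem_univ, true_and, Pi.neg_apply, neg_lt_neg_iff] at hij
    simpa only [Pi.neg_apply, neg_sub_neg] using div_mem_tieRatios hij.1 hij.2
  exact (subset f g).antisymm (by simpa using subset (-f) (-g))

/- In the coordinates `(f, g)`, the set `U` lies on the vertical line `f = c` and `V` on the
horizontal line `g = c'`, both before the corner `(c, c')`. Joining the point `v` of `V` nearest the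
corner to `U`, and the point `u` of `U` nearest the corner to `V`, gives two fans of lines whose
directions lie on either side of that of `uv`, which is the only one they share. -/
theorem card_add_card_le_card_tieRatios_add_one {f g : ι → K}
    (hinj : Function.Injective fun i => (f i, g i)) {U V : Finset ι} {c c' : K}
    (hU : U.Nonempty) (hV : V.Nonempty) (hfU : ∀ i ∈ U, f i = c) (hgU : ∀ i ∈ U, g i < c')
    (hfV : ∀ i ∈ V, f i < c) (hgV : ∀ i ∈ V, g i = c') : #U + #V ≤ #(tieRatios f g) + 1 := by
  obtain ⟨u, hu, hmax_u⟩ := exists_max_image U g hU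
  obtain ⟨v, hv, hmax_v⟩ := exists_max_image V f hV
  have hv_pos : 0 < c - f v := sub_pos.2 (hfV v hv)
  have hu_pos : 0 < c' - g u := sub_pos.2 (hgU u hu)
  set fan_v := U.image fun i => (c - f v) / (c' - g i)
  set fan_u := V.image fun i => (c - f i) / (c' - g u)
  have hcard_v : #fan_v = #U := by
    refine card_image_of_injOn fun i hi j hj hij => ?_
    have hgij : c' - g i = c' - g j := by
      simpa only [div_eq_mul_inv, mul_right_inj' hv_pos.ne', inv_inj] using hij
    exact hinj (Prod.ext ((hfU i hi).trans (hfU j hj).symm) (sub_right_injective hgij))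
  have hcard_u : #fan_u = #V := by
    refine card_image_of_injOn fun i hi j hj hij => ?_
    have hfij : c - f i = c - f j := (div_left_inj' hu_pos.ne').1 hij
    exact hinj (Prod.ext (sub_right_injective hfij) ((hgV i hi).trans (hgV j hj).symm))
  have htie {i j : ι} (hi : i ∈ U) (hj : j ∈ V) : (c - f j) / (c' - g i) ∈ tieRatios f g := by
    rw [← hfU i hi, ← hgV j hj]
    exact div_mem_tieRatios (hfU i hi ▸ hfV j hj) (hgV j hj ▸ hgU i hi)
  have hle_v : ∀ β ∈ fan_v, β ≤ (c - f v) / (c' - g u) := forall_mem_image.2 fun i hi => by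
    have := hmax_u i hi
    gcongr
  have hle_u : ∀ β ∈ fan_u, (c - f v) / (c' - g u) ≤ β := forall_mem_image.2 fun i hi => by
    have := hmax_v i hi
    gcongr
  rw [← hcard_v, ← hcard_u]
  exact (card_add_card_le_card_union_add_one hle_v hle_u).trans <| Nat.add_le_add_right
    (card_le_card (union_subset (image_subset_iff.2 fun i hi => htie hi hv)
      (image_subset_iff.2 fun i hi => htie hu hi))) 1

variable [DecidableEq ι]

theorem IsLowerHalf.neg {h : ι → K} {A : Finset ι} (hA : IsLowerHalf h A) :
    IsLowerHalf (-h) Aᶜ :=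
  ⟨by rw [compl_compl, hA.card_eq], fun p hp q hq =>
    neg_le_neg (hA.le q (notMem_compl.1 hq) p (mem_compl.1 hp))⟩

theorem IsCrossing.neg {h : ι → K} {A B : Finset ι} (hAB : IsCrossing h A B) :
    IsCrossing (-h) Aᶜ Bᶜ :=
  ⟨hAB.left.neg, hAB.right.neg, compl_injective.ne hAB.ne⟩

theorem IsCrossing.card_sdiff_add_card_sdiff_le_of_no_corner {f g : ι → K}
    (hinj : Function.Injective fun i => (f i, g i)) {A B C : Finset ι} (hf : IsCrossing f A B)
    (hg : IsCrossing g B C)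
    (hcorner : ¬∃ i ∈ B, (∀ j ∈ B, f j ≤ f i) ∧ ∀ j ∈ B, g j ≤ g i) :
    #(B \ A) + #(B \ C) ≤ #(tieRatios f g) + 1 := by
  obtain ⟨c, hfc, hfBA⟩ := hf.exists_level
  obtain ⟨c', hgc, hgBC⟩ := hg.symm.exists_level
  have hno_corner (i) (hi : i ∈ B) : ¬(f i = c ∧ g i = c') := by
    rintro ⟨rfl, rfl⟩
    exact hcorner ⟨i, hi, hfc, hgc⟩
  refine card_add_card_le_card_tieRatios_add_one hinj hf.sdiff_nonempty hg.symm.sdiff_nonempty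
    hfBA (fun i hi => ?_) (fun i hi => ?_) hgBC
  · have hiB := (mem_sdiff.1 hi).1
    exact (hgc i hiB).lt_of_ne fun h => hno_corner i hiB ⟨hfBA i hi, h⟩
  · have hiB := (mem_sdiff.1 hi).1
    exact (hfc i hiB).lt_of_ne fun h => hno_corner i hiB ⟨h, hgBC i hi⟩

/- At most one of `B` and its complement has a point extreme for both `f` and `g`, since two such
points would have the same coordinates `(f, g)`. -/
theorem IsCrossing.card_sdiff_add_card_sdiff_le {f g : ι → K}
    (hinj : Function.Injective fun i => (f i, g i)) {A B C : Finset ι} (hf : IsCrossing f A B)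
    (hg : IsCrossing g B C) : #(B \ A) + #(C \ B) ≤ #(tieRatios f g) + 1 := by
  by_cases hcorner : ∃ i ∈ B, (∀ j ∈ B, f j ≤ f i) ∧ ∀ j ∈ B, g j ≤ g i
  · have hinj_neg : Function.Injective fun i => ((-f) i, (-g) i) := fun i j hij =>
      hinj (by simpa using hij)
    have hupper := hf.neg.card_sdiff_add_card_sdiff_le_of_no_corner hinj_neg hg.neg ?_
    · rwa [tieRatios_neg, compl_sdiff_compl, compl_sdiff_compl, ← hf.card_sdiff_comm] at hupper
    rintro ⟨j, hj, hfj, hgj⟩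
    simp only [mem_compl, Pi.neg_apply, neg_le_neg_iff] at hj hfj hgj
    obtain ⟨i, hi, hfi, hgi⟩ := hcorner
    have hij : i = j := hinj (Prod.ext (hf.eq_of_forall_le hi hj hfi hfj)
      (hg.symm.eq_of_forall_le hi hj hgi hgj))
    exact hj (hij ▸ hi)
  · rw [hg.card_sdiff_comm]
    exact hf.card_sdiff_add_card_sdiff_le_of_no_corner hinj hg hcorner

end Fan

section Sweep

variable {ι K : Type*} [Field K] {x y : ι → K}

/-- The functional on the points `(x i, y i)` whose level lines have slope `s`. -/
def sweep (x y : ι → K) (s : K) : ι → K := fun i => y i - s * x i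

theorem sweep_prod_injective (hx : Function.Injective x) (y : ι → K) {a b : K} (hab : a ≠ b) :
    Function.Injective fun i => (sweep x y a i, sweep x y b i) := by
  intro i j hij
  obtain ⟨ha, hb⟩ := Prod.mk.inj hij
  simp only [sweep] at ha hb
  have : (a - b) * (x i - x j) = 0 := by linear_combination hb - ha
  exact hx (sub_eq_zero.1 ((mul_eq_zero.1 this).resolve_left (sub_ne_zero.2 hab)))

variable [Fintype ι] [LinearOrder K]

/-- The slopes of the lines through two of the points `(x i, y i)`. Vertical lines contribute the
junk value `0`; the abscissas are injective wherever this is used. -/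
def slopes (x y : ι → K) : Finset K :=
  univ.offDiag.image fun e => (y e.1 - y e.2) / (x e.1 - x e.2)

theorem exists_mem_slopes_sweep_sub_eq (hx : Function.Injective x) (y : ι → K) {i j : ι}
    (hij : i ≠ j) :
    ∃ τ ∈ slopes x y, ∀ s, sweep x y s i - sweep x y s j = (τ - s) * (x i - x j) := by
  refine ⟨(y i - y j) / (x i - x j), mem_image.2 ⟨(i, j), by simpa using hij, rfl⟩, fun s => ?_⟩
  have : x i - x j ≠ 0 := sub_ne_zero.2 (hx.ne hij)
  simp only [sweep]
  field_simp
  ring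

theorem sweep_injective (hx : Function.Injective x) {t : K} (ht : t ∉ slopes x y) :
    Function.Injective (sweep x y t) := by
  intro i j hij
  by_contra hne
  obtain ⟨τ, hτ, hsub⟩ := exists_mem_slopes_sweep_sub_eq hx y hne
  have hzero := hsub t
  rw [hij, sub_self, zero_eq_mul, sub_eq_zero, sub_eq_zero] at hzero
  exact hzero.elim (fun h => ht (h ▸ hτ)) (fun h => hne (hx h))

variable [IsStrictOrderedRing K]

theorem card_tieRatios_sweep_le (hx : Function.Injective x) (y : ι → K) {a b : K} (hab : a < b) :
    #(tieRatios (sweep x y a) (sweep x y b)) ≤ #{τ ∈ slopes x y | a < τ ∧ τ < b} := by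
  have hsub : tieRatios (sweep x y a) (sweep x y b) ⊆
      {τ ∈ slopes x y | a < τ ∧ τ < b}.image fun τ => (τ - a) / (b - τ) := fun β hβ => by
    obtain ⟨⟨i, j⟩, hij, rfl⟩ := mem_image.1 hβ
    simp only [mem_filter, mem_univ, true_and] at hij
    obtain ⟨τ, hτ, hsub⟩ := exists_mem_slopes_sweep_sub_eq hx y (ne_of_apply_ne _ hij.1.ne')
    have ha : 0 < (τ - a) * (x i - x j) := hsub a ▸ sub_pos.2 hij.1
    have hb : (τ - b) * (x i - x j) < 0 := hsub b ▸ sub_neg.2 hij.2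
    have hpos : 0 < x i - x j :=
      pos_of_mul_pos_right (by linarith : 0 < (b - a) * (x i - x j)) (sub_nonneg.2 hab.le)
    refine mem_image.2 ⟨τ, mem_filter.2 ⟨hτ, ?_, ?_⟩, ?_⟩
    · exact sub_pos.1 ((mul_pos_iff_of_pos_right hpos).1 ha)
    · exact sub_neg.1 (neg_of_mul_neg_left hb hpos.le)
    · rw [hsub a, ← neg_sub (sweep x y b i), hsub b, ← neg_mul, neg_sub,
        mul_div_mul_right _ _ hpos.ne']
  exact (card_le_card hsub).trans card_image_le

theorem card_tieRatios_sweep_neg_le (hx : Function.Injective x) (y : ι → K) (a b : K) :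
    #(tieRatios (sweep x y b) (-sweep x y a)) ≤ #{τ ∈ slopes x y | ¬(a ≤ τ ∧ τ ≤ b)} := by
  have hsub : tieRatios (sweep x y b) (-sweep x y a) ⊆
      {τ ∈ slopes x y | ¬(a ≤ τ ∧ τ ≤ b)}.image fun τ => (τ - b) / (τ - a) := fun β hβ => by
    obtain ⟨⟨i, j⟩, hij, rfl⟩ := mem_image.1 hβ
    simp only [mem_filter, mem_univ, true_and, Pi.neg_apply, neg_lt_neg_iff] at hij
    obtain ⟨τ, hτ, hsub⟩ := exists_mem_slopes_sweep_sub_eq hx y (ne_of_apply_ne _ hij.1.ne')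
    have ha : 0 < (τ - a) * (x i - x j) := hsub a ▸ sub_pos.2 hij.2
    have hb : 0 < (τ - b) * (x i - x j) := hsub b ▸ sub_pos.2 hij.1
    refine mem_image.2 ⟨τ, mem_filter.2 ⟨hτ, ?_⟩, ?_⟩
    · rintro ⟨haτ, hτb⟩
      have hpos : 0 < x i - x j := pos_of_mul_pos_right ha (sub_nonneg.2 haτ)
      exact hτb.not_gt (sub_pos.1 ((mul_pos_iff_of_pos_right hpos).1 hb))
    · rw [hsub b, Pi.neg_apply, Pi.neg_apply, neg_sub_neg, hsub a,
        mul_div_mul_right _ _ (right_ne_zero_of_mul ha.ne')]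
  exact (card_le_card hsub).trans card_image_le

variable [DecidableEq ι]

theorem IsLowerHalf.sweep_of_forall_mem_uIcc (hx : Function.Injective x) {r s : K} {A : Finset ι}
    (hA : IsLowerHalf (sweep x y r) A) (hrs : ∀ τ ∈ slopes x y, τ ∈ Set.uIcc r s → τ = s) :
    IsLowerHalf (sweep x y s) A := by
  refine ⟨hA.card_eq, fun p hp q hq => ?_⟩
  obtain ⟨τ, hτ, hsub⟩ := exists_mem_slopes_sweep_sub_eq hx y (ne_of_mem_of_not_mem hp hq)
  have hr : (τ - r) * (x p - x q) ≤ 0 := hsub r ▸ sub_nonpos.2 (hA.le p hp q hq)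
  rw [← sub_nonpos, hsub s]
  by_contra! hs
  have hτs : τ ≠ s := by rintro rfl; simp at hs
  refine hτs (hrs τ hτ (Set.mem_uIcc.2 ?_))
  rcases pos_and_pos_or_neg_and_neg_of_mul_pos hs with ⟨hs, hpq⟩ | ⟨hs, hpq⟩
  · exact Or.inr ⟨by linarith, by linarith [nonpos_of_mul_nonpos_left hr hpq]⟩
  · exact Or.inl ⟨by linarith [nonneg_of_mul_nonpos_left hr hpq], by linarith⟩

theorem IsLowerHalf.sweep_compl (hx : Function.Injective x) {r t : K} {A : Finset ι}
    (hA : IsLowerHalf (sweep x y r) A) (hr : ∀ τ ∈ slopes x y, r < τ)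
    (ht : ∀ τ ∈ slopes x y, τ < t) : IsLowerHalf (sweep x y t) Aᶜ := by
  refine ⟨by rw [compl_compl, hA.card_eq], fun q hq p hp => ?_⟩
  rw [mem_compl] at hq
  rw [notMem_compl] at hp
  obtain ⟨τ, hτ, hsub⟩ := exists_mem_slopes_sweep_sub_eq hx y (ne_of_mem_of_not_mem hp hq)
  have hle : (τ - r) * (x p - x q) ≤ 0 := hsub r ▸ sub_nonpos.2 (hA.le p hp q hq)
  have hpq : x p - x q ≤ 0 := nonpos_of_mul_nonpos_right hle (sub_pos.2 (hr τ hτ))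
  rw [← sub_nonneg, hsub t]
  exact mul_nonneg_of_nonpos_of_nonpos (sub_nonpos.2 (ht τ hτ).le) hpq

theorem exists_isLowerHalf_sweep_before (hcard : Even (Fintype.card ι)) (hx : Function.Injective x)
    (y : ι → K) (s : K) : ∃ t < s, (∀ τ ∈ slopes x y, τ < t ∨ s ≤ τ) ∧
      ∃ A, IsLowerHalf (sweep x y t) A ∧ IsLowerHalf (sweep x y s) A := by
  obtain ⟨t, hlt, hts⟩ := Order.exists_between_finsets {τ ∈ slopes x y | τ < s} {s} (by simp)
  have hts : t < s := by simpa using hts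
  have ht (τ) (hτ : τ ∈ slopes x y) : τ < t ∨ s ≤ τ :=
    (lt_or_ge τ s).imp_left fun h => hlt τ (mem_filter.2 ⟨hτ, h⟩)
  obtain ⟨A, hA⟩ := exists_isLowerHalf hcard (sweep x y t)
  refine ⟨t, hts, ht, A, hA, hA.sweep_of_forall_mem_uIcc hx fun τ hτ hmem => ?_⟩
  rw [Set.uIcc_of_le hts.le] at hmem
  exact hmem.2.antisymm ((ht τ hτ).resolve_left hmem.1.not_gt)

/- Here `a` and `b` are the first and the last crossing between `r` and `t`. With jumps `j₁, …, jₘ`,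
there are `m` slopes of crossings and at least `jₖ + jₖ₊₁ - 1` slopes between two consecutive ones,
hence at least `2 (j₁ + ⋯ + jₘ) - j₁ - jₘ + 1` slopes in `[a, b]`. -/
theorem exists_isCrossing_sweep (hcard : Even (Fintype.card ι)) (hx : Function.Injective x)
    {r t : K} (hr : ∀ τ ∈ slopes x y, r < τ) (ht : t ∉ slopes x y) {L A : Finset ι}
    (hL : IsLowerHalf (sweep x y r) L) (hA : IsLowerHalf (sweep x y t) A) (hne : L ≠ A) :
    ∃ a b B C, a ≤ b ∧ b < t ∧ IsCrossing (sweep x y a) L B ∧ IsCrossing (sweep x y b) C A ∧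
      2 * #(A \ L) + 1 ≤ #{τ ∈ slopes x y | a ≤ τ ∧ τ ≤ b} + #(B \ L) + #(A \ C) := by
  induction hS : {τ ∈ slopes x y | τ < t} using Finset.strongInduction generalizing t A with
  | H S ih =>
  subst hS
  obtain hempty | hnonempty := {τ ∈ slopes x y | τ < t}.eq_empty_or_nonempty
  · have hLt : IsLowerHalf (sweep x y t) L := hL.sweep_of_forall_mem_uIcc hx (by
      simp only [filter_eq_empty_iff, Set.mem_uIcc] at hempty ⊢
      grind)
    exact absurd (hLt.eq_of_injective (sweep_injective hx ht) hA) hne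
  obtain ⟨s, hs, hmax⟩ := exists_max_image _ id hnonempty
  simp only [mem_filter, id, and_imp] at hs hmax
  obtain ⟨t', ht's, ht', A', hA', hA's⟩ := exists_isLowerHalf_sweep_before hcard hx y s
  have hAs : IsLowerHalf (sweep x y s) A := hA.sweep_of_forall_mem_uIcc hx (by
    simp only [Set.mem_uIcc]
    grind)
  have ih' := ih {τ ∈ slopes x y | τ < t'} ((ssubset_iff_of_subset (by grind)).2
    ⟨s, by grind⟩) (by grind) hA'
  obtain rfl | hA'A := eq_or_ne A' A
  · obtain ⟨a, b, B, C, hab, hbt', h⟩ := ih' hne rfl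
    exact ⟨a, b, B, C, hab, (hbt'.trans ht's).trans hs.2, h⟩
  have hcross : IsCrossing (sweep x y s) A' A := ⟨hA's, hAs, hA'A⟩
  obtain rfl | hLA' := eq_or_ne L A'
  · have : 0 < #{τ ∈ slopes x y | s ≤ τ ∧ τ ≤ s} :=
      card_pos.2 ⟨s, mem_filter.2 ⟨hs.1, le_rfl, le_rfl⟩⟩
    exact ⟨s, s, A, L, le_rfl, hs.2, hcross, hcross, by omega⟩
  obtain ⟨a, b, B, C, hab, hbt', hLB, hCA', hcount⟩ := ih' hLA' rfl
  have hbs : b < s := hbt'.trans ht's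
  refine ⟨a, s, B, A', hab.trans hbs.le, hs.2, hLB, hcross, ?_⟩
  have hfan := (hCA'.card_sdiff_add_card_sdiff_le (sweep_prod_injective hx y hbs.ne) hcross).trans
    (Nat.add_le_add_right (card_tieRatios_sweep_le hx y hbs) 1)
  have hslopes := card_Icc_add_card_Ioo_lt_card_Icc hab hbs hs.1
  have htriangle : #(A \ L) ≤ #(A \ A') + #(A' \ L) :=
    (card_le_card (sdiff_triangle A A' L)).trans (card_union_le _ _)
  omega

omit [DecidableEq ι] in
theorem card_le_card_slopes (hcard : Even (Fintype.card ι)) (hx : Function.Injective x)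
    (hncol : ∀ s c, ∃ i, sweep x y s i ≠ c) : Fintype.card ι ≤ #(slopes x y) := by
  classical
  obtain ⟨r, -, hr⟩ := Order.exists_between_finsets ∅ (slopes x y) (by simp)
  obtain ⟨t, ht, -⟩ := Order.exists_between_finsets (slopes x y) ∅ (by simp)
  obtain ⟨L, hL⟩ := exists_isLowerHalf hcard (sweep x y r)
  have hLc : IsLowerHalf (sweep x y t) Lᶜ := hL.sweep_compl hx hr ht
  have : Nonempty ι := (hncol 0 0).nonempty
  obtain ⟨a, b, B, C, hab, -, hLB, hCL, hcount⟩ := exists_isCrossing_sweep hcard hx hr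
    (fun h => (ht t h).false) hL hLc ne_compl_self
  have hhalf : 2 * #(Lᶜ \ L) = Fintype.card ι := by
    rw [sdiff_eq_left.2 disjoint_compl_left, ← card_add_card_compl L, hL.card_eq, two_mul]
  obtain rfl | hab := hab.eq_or_lt
  · obtain ⟨i, hi⟩ := hncol a (sweep x y a (Classical.arbitrary ι))
    exact absurd (hLB.left.apply_eq_apply_of_compl hCL.right i _) hi
  -- Across the vertical direction, `sweep x y b` turns into `-sweep x y a`.
  have hfan := (hCL.card_sdiff_add_card_sdiff_le (g := -sweep x y a)
    (fun i j hij => sweep_prod_injective hx y hab.ne' (by simpa using hij)) hLB.neg).trans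
    (Nat.add_le_add_right (card_tieRatios_sweep_neg_le hx y a b) 1)
  rw [compl_sdiff_compl, ← hLB.card_sdiff_comm] at hfan
  have hslopes := card_filter_add_card_filter_not (s := slopes x y) fun τ => a ≤ τ ∧ τ ≤ b
  omega

end Sweep

section Directions

/-- A family `S` of pairs of distinct points of `P`, no two of which span parallel lines. Its
cardinality counts directions determined by `P`. -/
structure IsDirectionFamily (K : Type*) {V : Type*} [Field K] [AddCommGroup V] [Module K V]
    (P : Finset V) (S : Finset (V × V)) : Prop where
  mem : ∀ e ∈ S, e.1 ∈ P ∧ e.2 ∈ P ∧ e.1 ≠ e.2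
  not_parallel : ∀ e₁ ∈ S, ∀ e₂ ∈ S, e₁ ≠ e₂ → ∀ c : K, e₂.2 - e₂.1 ≠ c • (e₁.2 - e₁.1)

section Field

variable {K V : Type*} [Field K] [AddCommGroup V] [Module K V]

theorem IsDirectionFamily.mono {P Q : Finset V} {S : Finset (V × V)} (hS : IsDirectionFamily K P S)
    (hPQ : P ⊆ Q) : IsDirectionFamily K Q S :=
  ⟨fun e he => ⟨hPQ (hS.mem e he).1, hPQ (hS.mem e he).2.1, (hS.mem e he).2.2⟩, hS.not_parallel⟩

theorem not_collinear_of_affineSpan_eq_top {s : Set V} (hs : affineSpan K s = ⊤)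
    (hfinrank : 1 < Module.finrank K V) : ¬Collinear K s := by
  intro hcol
  have : FiniteDimensional K V := Module.finite_of_finrank_pos (by omega)
  have hle := hcol.finrank_le_one
  rw [← direction_affineSpan, hs, AffineSubspace.direction_top, finrank_top] at hle
  exact hle.not_gt hfinrank

theorem isDirectionFamily_singleton_product_erase [DecidableEq V] {P : Finset V} {q : V}
    (hq : q ∈ P) (hP : ¬Collinear K (P : Set V))
    (herase : Collinear K (P.erase q : Set V)) :
    IsDirectionFamily K P ({q} ×ˢ P.erase q) := by
  simp only [coe_erase] at herase
  refine ⟨fun e he => ?_, ?_⟩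
  · obtain ⟨he₁, he₂⟩ := mem_product.1 he
    rw [mem_singleton] at he₁
    exact ⟨he₁ ▸ hq, mem_of_mem_erase he₂, he₁ ▸ (ne_of_mem_erase he₂).symm⟩
  rintro ⟨q₁, p⟩ hp ⟨q₂, r⟩ hr hne c hparallel
  simp only [mem_product, mem_singleton] at hp hr
  obtain ⟨rfl, hp⟩ := hp
  obtain ⟨rfl, hr⟩ := hr
  have hpr : p ≠ r := fun h => hne (by rw [h])
  have hr_line : r ∈ line[K, q₂, p] := by
    rw [show r = c • (p - q₂) + q₂ from sub_eq_iff_eq_add.1 hparallel]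
    exact AffineMap.lineMap_mem_affineSpan_pair c q₂ p
  have hq_line : q₂ ∈ line[K, p, r] :=
    (collinear_insert_of_mem_affineSpan_pair hr_line).mem_affineSpan_of_mem_of_ne
      (by simp) (by simp) (by simp) hpr
  have hq_span : q₂ ∈ affineSpan K (P.erase q₂ : Set V) :=
    affineSpan_mono K (Set.pair_subset hp hr) hq_line
  refine hP ?_
  rw [← insert_erase hq, coe_insert]
  exact (collinear_insert_iff_of_mem_affineSpan hq_span).2 (by simpa using herase)

theorem exists_dual_injOn [Infinite K] (P : Finset V) :
    ∃ X : Module.Dual K V, Set.InjOn X (P : Set V) := by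
  obtain ⟨X, hX⟩ := Module.exists_dual_forall_apply_ne_zero (K := K)
    (fun e : {e : P × P // e.1 ≠ e.2} => (e.1.1 : V) - e.1.2)
    fun e => sub_ne_zero.2 (Subtype.coe_injective.ne e.2)
  refine ⟨X, fun p hp q hq hpq => ?_⟩
  by_contra hne
  exact hX ⟨(⟨p, hp⟩, ⟨q, hq⟩), by simpa using hne⟩ (by simp [hpq])

theorem exists_dual_forall_exists_sub_mul_ne {s : Set V} (hs : ¬Collinear K s) {X : Module.Dual K V}
    (hX : Set.InjOn X s) : ∃ Y : Module.Dual K V, ∀ m c, ∃ p ∈ s, Y p - m * X p ≠ c := by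
  obtain ⟨p₀, hp₀, p₁, hp₁, hne⟩ : s.Nontrivial := by
    refine Set.not_subsingleton_iff.1 fun hsub => hs ?_
    obtain rfl | ⟨p, rfl⟩ := hsub.eq_empty_or_singleton
    exacts [collinear_empty K V, collinear_singleton K p]
  have hX₁ : X p₁ - X p₀ ≠ 0 := sub_ne_zero.2 fun h => hne (hX hp₁ hp₀ h).symm
  by_contra! haffine
  refine hs ((collinear_iff_of_mem hp₀).2 ⟨p₁ - p₀, fun p hp =>
    ⟨(X p - X p₀) / (X p₁ - X p₀), ?_⟩⟩)
  rw [vadd_eq_add, ← sub_eq_iff_eq_add, ← sub_eq_zero, ← Module.forall_dual_apply_eq_zero_iff K]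
  intro Y
  obtain ⟨m, c, hm⟩ := haffine Y
  have hm₀ := hm p₀ hp₀
  have hm₁ := hm p₁ hp₁
  have hm := hm p hp
  have hY₁ : Y p₁ - Y p₀ = m * (X p₁ - X p₀) := by linear_combination hm₁ - hm₀
  simp only [map_sub, map_smul, smul_eq_mul, hY₁]
  field_simp
  linear_combination hm - hm₀

end Field

variable {K V : Type*} [Field K] [LinearOrder K] [AddCommGroup V] [Module K V]

theorem exists_isDirectionFamily_card_eq_card_slopes {P : Finset V} {X : Module.Dual K V}
    (hX : Set.InjOn X (P : Set V)) (Y : Module.Dual K V) :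
    ∃ S, #S = #(slopes (fun p : P => X p) fun p : P => Y p) ∧ IsDirectionFamily K P S := by
  obtain ⟨S, hSP, hinj, himage⟩ := exists_subset_injOn_image_eq_of_surjOn
    (f := fun e : V × V => Y (e.2 - e.1) / X (e.2 - e.1)) (P.offDiag : Set (V × V))
    (slopes (fun p : P => X p) fun p : P => Y p) (by
      intro τ hτ
      obtain ⟨⟨i, j⟩, hij, rfl⟩ := mem_image.1 hτ
      exact ⟨(j, i), mem_offDiag.2
        ⟨j.2, i.2, Subtype.coe_injective.ne (mem_offDiag.1 hij).2.2.symm⟩, by simp⟩)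
  have hmem (e) (he : e ∈ S) := mem_offDiag.1 (mem_coe.1 (hSP he))
  refine ⟨S, by rw [← himage, card_image_of_injOn hinj], hmem, ?_⟩
  intro e₁ he₁ e₂ he₂ hne c hparallel
  obtain ⟨h₁, h₂, hne₂⟩ := hmem e₂ he₂
  have hX₂ : X (e₂.2 - e₂.1) ≠ 0 := by
    rw [map_sub]
    exact sub_ne_zero.2 fun h => hne₂ (hX h₂ h₁ h).symm
  have hc : c ≠ 0 := by
    rintro rfl
    simp [hparallel] at hX₂
  refine hne (hinj he₁ he₂ ?_)
  simp only [hparallel, map_smul, smul_eq_mul, mul_div_mul_left _ _ hc]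

variable [IsStrictOrderedRing K]

theorem exists_card_le_isDirectionFamily_of_even {P : Finset V} (hcard : Even #P)
    (hP : ¬Collinear K (P : Set V)) : ∃ S, #P ≤ #S ∧ IsDirectionFamily K P S := by
  obtain ⟨X, hX⟩ := exists_dual_injOn (K := K) P
  obtain ⟨Y, hY⟩ := exists_dual_forall_exists_sub_mul_ne hP hX
  obtain ⟨S, hcardS, hS⟩ := exists_isDirectionFamily_card_eq_card_slopes hX Y
  refine ⟨S, ?_, hS⟩
  rw [hcardS, ← Fintype.card_coe P]
  refine card_le_card_slopes (by rwa [Fintype.card_coe]) hX.injective fun m c => ?_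
  obtain ⟨p, hp, hne⟩ := hY m c
  exact ⟨⟨p, hp⟩, hne⟩

end Directions

end Ungar

open Ungar

theorem distinct_directions_at_least_n_sub_one_general {K V : Type*} [Field K] [LinearOrder K]
    [IsStrictOrderedRing K] [AddCommGroup V] [Module K V] (P : Finset V)
    (hP : ¬Collinear K (P : Set V)) : ∃ S, #P - 1 ≤ #S ∧ IsDirectionFamily K P S := by
  classical
  obtain heven | hodd := Nat.even_or_odd #P
  · obtain ⟨S, hcardS, hS⟩ := exists_card_le_isDirectionFamily_of_even heven hP
    exact ⟨S, by omega, hS⟩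
  obtain ⟨q, hq⟩ := card_pos.1 hodd.pos
  have hcard_erase := card_erase_of_mem hq
  by_cases herase : Collinear K (P.erase q : Set V)
  · exact ⟨_, by rw [card_product, card_singleton, one_mul, hcard_erase],
      isDirectionFamily_singleton_product_erase hq hP herase⟩
  · have heven : Even #(P.erase q) := hcard_erase ▸ hodd.tsub_odd odd_one
    obtain ⟨S, hcardS, hS⟩ := exists_card_le_isDirectionFamily_of_even heven herase
    exact ⟨S, hcard_erase ▸ hcardS, hS.mono (erase_subset q P)⟩

/-- For every integer `d ≥ 2`, any finite set `P` of `n` points in `ℝ^d` whose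
affine span is all of `ℝ^d` determines at least `n − 1` lines with pairwise
distinct directions: there is a finite set `S` of at least `n − 1` ordered pairs
of distinct points of `P` whose difference vectors are pairwise non-parallel.
(This follows from Ungar's theorem by projection.) -/
theorem distinct_directions_at_least_n_sub_one (d n : ℕ) (hd : 2 ≤ d)
    (P : Finset (Fin d → ℝ)) (hcard : P.card = n)
    (hspan : affineSpan ℝ (P : Set (Fin d → ℝ)) = ⊤) :
    ∃ S : Finset ((Fin d → ℝ) × (Fin d → ℝ)),
      n - 1 ≤ S.card ∧
      (∀ e ∈ S, e.1 ∈ P ∧ e.2 ∈ P ∧ e.1 ≠ e.2) ∧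
      (∀ e₁ ∈ S, ∀ e₂ ∈ S, e₁ ≠ e₂ →
        ∀ c : ℝ, e₂.2 - e₂.1 ≠ c • (e₁.2 - e₁.1)) := by
  subst hcard
  obtain ⟨S, hcardS, hS⟩ := distinct_directions_at_least_n_sub_one_general P
    (not_collinear_of_affineSpan_eq_top hspan (by rwa [Module.finrank_fin_fun]))
  exact ⟨S, hcardS, hS.mem, hS.not_parallel⟩
end
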